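/- arXiv:1411.5598 — 6 statements merged into one kernel-verified Lean document; each statement's English description precedes it below -/
import Mathlib

section
/- Let V be a complex vector space and let E₋₂, E₋₁, E₀, E₁, E₂ be endomorphisms of V satisfying [E_i, E_j] = (i−j)·E_{i+j} for all i, j ∈ {−2,−1,0,1,2} with i+j ∈ {−2,−1,0,1,2}. If not all five endomorphisms are zero, then either the family (E₋₂, E₋₁, E₀, E₁, E₂) is linearly independent over ℂ, or else E₋₁ = E₀ = E₁ = 0 and the pair (E₋₂, E₂) is linearly independent over ℂ. -/
/-!
The operator `ad E₀` multiplies `E j` by `-j`, so the nonzero members of the family are eigenvectors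
for distinct eigenvalues. One vanishing member kills the whole family: bracketing with `E₁` or `E₋₁`
carries `E j = 0` one index at a time to `E₀ = 0`, and `⁅E₀, E k⁆ = -k E k` carries that on to every
index `k`. In particular `E₀ = 0` already forces `E₋₂ = E₂ = 0`, so of the two alternatives in the
theorem it is always the first that holds.
-/

/-- The family `E` in the Lie ring `L` represents the partial Witt algebra of size `(m, n)`: the
Witt relations hold whenever all three indices lie in `[m, n]`. Members of `E` with index outside
`[m, n]` are unconstrained, and integer scalars keep the notion independent of a ground ring. -/
def IsPartialWittFamily {L : Type*} [LieRing L] (m n : ℤ) (E : ℤ → L) : Prop :=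
  ∀ ⦃i j : ℤ⦄, i ∈ Set.Icc m n → j ∈ Set.Icc m n → i + j ∈ Set.Icc m n →
    ⁅E i, E j⁆ = (i - j) • E (i + j)

namespace IsPartialWittFamily

variable {L : Type*} [LieRing L] {m n : ℤ} {E : ℤ → L}

theorem lie_zero_left (hE : IsPartialWittFamily m n E) (h0 : 0 ∈ Set.Icc m n) {j : ℤ}
    (hj : j ∈ Set.Icc m n) : ⁅E 0, E j⁆ = -j • E j := by
  simpa using hE h0 hj (by simpa using hj)

theorem hasEigenvector_ad {R : Type*} [CommRing R] [LieAlgebra R L]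
    (hE : IsPartialWittFamily m n E) (h0 : 0 ∈ Set.Icc m n) {j : ℤ} (hj : j ∈ Set.Icc m n)
    (hne : E j ≠ 0) : (LieAlgebra.ad R L (E 0)).HasEigenvector (-j : R) (E j) := by
  refine ⟨Module.End.mem_eigenspace_iff.mpr ?_, hne⟩
  rw [LieAlgebra.ad_apply, hE.lie_zero_left h0 hj, ← Int.cast_neg, Int.cast_smul_eq_zsmul]

variable [IsAddTorsionFree L]

theorem apply_add_eq_zero (hE : IsPartialWittFamily m n E) {i j : ℤ} (hi : i ∈ Set.Icc m n)
    (hj : j ∈ Set.Icc m n) (hadd : i + j ∈ Set.Icc m n) (hij : i ≠ j) (h : E i = 0) :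
    E (i + j) = 0 := by
  have hsmul : (i - j) • E (i + j) = 0 := by rw [← hE hi hj hadd, h, zero_lie]
  exact (smul_eq_zero.mp hsmul).resolve_left (sub_ne_zero.mpr hij)

theorem apply_zero_eq_zero (hE : IsPartialWittFamily m n E) (hm : m ≤ -1) (hn : 1 ≤ n) {j : ℤ}
    (hj : j ∈ Set.Icc m n) (h : E j = 0) : E 0 = 0 := by
  induction j with
  | zero => exact h
  | succ k ih =>
    have hk : E ((k + 1 : ℤ) + -1) = 0 :=
      hE.apply_add_eq_zero hj (by grind) (by grind) (by lia) h
    exact ih (by grind) (by simpa using hk)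
  | pred k ih =>
    have hk : E ((-k - 1 : ℤ) + 1) = 0 :=
      hE.apply_add_eq_zero hj (by grind) (by grind) (by lia) h
    exact ih (by grind) (by simpa using hk)

theorem eq_zero_of_apply_eq_zero (hE : IsPartialWittFamily m n E) (hm : m ≤ -1) (hn : 1 ≤ n)
    {j k : ℤ} (hj : j ∈ Set.Icc m n) (hk : k ∈ Set.Icc m n) (h : E j = 0) : E k = 0 := by
  have h0 : E 0 = 0 := hE.apply_zero_eq_zero hm hn hj h
  obtain rfl | hk0 := eq_or_ne k 0
  · exact h0
  · simpa using hE.apply_add_eq_zero (by grind) hk (by simpa using hk) hk0.symm h0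

end IsPartialWittFamily

theorem linearIndependent_vec_of_linearIndepOn_Icc {R M : Type*} [Semiring R] [AddCommMonoid M]
    [Module R M] {v : ℤ → M} (hv : LinearIndepOn R v (Set.Icc (-2) 2)) :
    LinearIndependent R ![v (-2), v (-1), v 0, v 1, v 2] := by
  let index (k : Fin 5) : Set.Icc (-2 : ℤ) 2 := ⟨(k : ℤ) - 2, by grind⟩
  have hindex : Function.Injective index := fun a b hab ↦ by grind
  have hvec : ![v (-2), v (-1), v 0, v 1, v 2] = fun k ↦ v (index k) := by
    ext k : 1
    fin_cases k <;> rfl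
  exact hvec ▸ hv.linearIndependent.comp index hindex

theorem partial_witt_rep_injective_or_sl2_trivial_general {R L : Type*} [CommRing R] [IsDomain R]
    [CharZero R] [LieRing L] [LieAlgebra R L] [Module.IsTorsionFree R L] {m n : ℤ} (hm : m ≤ -1)
    (hn : 1 ≤ n) {E : ℤ → L} (hE : IsPartialWittFamily m n E)
    (hne : ∃ k ∈ Set.Icc m n, E k ≠ 0) : LinearIndepOn R E (Set.Icc m n) := by
  obtain ⟨k, hk, hEk⟩ := hne
  have : IsAddTorsionFree L := .of_isTorsionFree R L
  have hnonzero (j : Set.Icc m n) : E j ≠ 0 := fun hj ↦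
    hEk (hE.eq_zero_of_apply_eq_zero hm hn j.2 hk hj)
  have hinj : Function.Injective fun j : Set.Icc m n ↦ (-(j : ℤ) : R) := fun i j hij ↦
    Subtype.ext (Int.cast_injective (neg_injective hij))
  exact Module.End.eigenvectors_linearIndependent' (LieAlgebra.ad R L (E 0)) _ hinj _
    fun j ↦ hE.hasEigenvector_ad (by grind) j.2 (hnonzero j)

/-- A representation of the partial Witt algebra Γ of size (−2,2) on a
complex vector space is either injective (the five endomorphisms are linearly
independent) or kills exactly the copy of sl(2). -/
theorem partial_witt_rep_injective_or_sl2_trivial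
    (V : Type*) [AddCommGroup V] [Module ℂ V]
    (E : ℤ → Module.End ℂ V)
    (hcomm : ∀ i j : ℤ, -2 ≤ i → i ≤ 2 → -2 ≤ j → j ≤ 2 → -2 ≤ i + j → i + j ≤ 2 →
      ⁅E i, E j⁆ = ((i - j : ℤ) : ℂ) • E (i + j))
    (hne : ¬ (E (-2) = 0 ∧ E (-1) = 0 ∧ E 0 = 0 ∧ E 1 = 0 ∧ E 2 = 0)) :
    LinearIndependent ℂ ![E (-2), E (-1), E 0, E 1, E 2] ∨
      (E (-1) = 0 ∧ E 0 = 0 ∧ E 1 = 0 ∧ LinearIndependent ℂ ![E (-2), E 2]) := by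
  let _ : LieRing (Module.End ℂ V) := LieRing.ofAssociativeRing
  have hE : IsPartialWittFamily (-2) 2 E := fun i j hi hj hij ↦ by
    rw [hcomm i j hi.1 hi.2 hj.1 hj.2 hij.1 hij.2, Int.cast_smul_eq_zsmul]
  have hexists : ∃ k ∈ Set.Icc (-2 : ℤ) 2, E k ≠ 0 := by
    by_contra! h
    exact hne (by simp [h])
  exact .inl <| linearIndependent_vec_of_linearIndepOn_Icc <|
    partial_witt_rep_injective_or_sl2_trivial_general (by norm_num) (by norm_num) hE hexists
end

section
/- Let (E,F,H) be a representation of sl(2,ℂ) on a complex vector space V and let T ∈ End(V) satisfy [F,T] = 3E and [H,T] = 4T. The following are equivalent: (1) there exists a Witt_>-module structure (ρ_i)_{i≥−1} on V compatible with (E,F,H) such that ρ₂ = T; (2) for all integers i, j ≥ 0, [(1/i!)·ad(E)^i(T), (1/j!)·ad(E)^j(T)] = (i−j)·(1/(i+j+2)!)·ad(E)^{i+j+2}(T); (3) there exists N ∈ ℕ such that for all k ≥ N, [T, (1/(2k−1)!)·ad(E)^{2k−1}(T)] = −((2k−1)/(2k+1)!)·ad(E)^{2k+1}(T). Moreover,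 in case (1) the structure is unique and is given by ρ_{2+i} = (1/i!)·ad(E)^i(T) for all i ≥ 0. -/
/-- A Witt_>-module structure on `V` compatible with the sl(2)-representation `(E,F,H)`:
a family `ρ : ℤ → End(V)` with `ρ₋₁ = F`, `ρ₀ = −(1/2)H`, `ρ₁ = −E` and
`[ρ_i, ρ_j] = (i−j)·ρ_{i+j}` for all `i, j ≥ −1`. -/
def IsWittGtModule {V : Type*} [AddCommGroup V] [Module ℂ V]
    (E F H : Module.End ℂ V) (ρ : ℤ → Module.End ℂ V) : Prop :=
  ρ (-1) = F ∧ ρ 0 = (-(1/2) : ℂ) • H ∧ ρ 1 = -E ∧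
    ∀ i j : ℤ, -1 ≤ i → -1 ≤ j → ⁅ρ i, ρ j⁆ = ((i - j : ℤ) : ℂ) • ρ (i + j)

/-- `adPow A n T = ad(A)^n (T)`. -/
def adPow {V : Type*} [AddCommGroup V] [Module ℂ V]
    (A : Module.End ℂ V) (n : ℕ) (T : Module.End ℂ V) : Module.End ℂ V :=
  (fun X => ⁅A, X⁆)^[n] T

/-!
Put `e n = ad(E)ⁿ(T) / n!`. Since `ρ₁ = -E`, the relations between `ρ₁` and `ρₙ` force
`ρ₂₊ₙ = e n`. Now `ad E` sends `e n` to `(n + 1) • e (n + 1)`, while the weight of `T` and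
`[F, T] = 3E` force `ad F` to send `e (n + 1)` to `-(n + 4) • e n`. Applying `ad F` to the relation
between `T` and `e (n + 1)` gives the one between `T` and `e n`, so relations of arbitrarily large
index yield all relations involving `T`; applying `ad E` to these yields the relation between `e i`
and `e j`. The other Witt relations only involve `ad E`, `ad F` and `ad H`.
-/

open Filter LieAlgebra
open scoped Nat

section DividedAd

variable {K L : Type*} [Field K] [LieRing L] [LieAlgebra K L]

variable (K) in
/-- The divided power `ad(E)ⁿ / n!` of the adjoint action, applied to `T`. -/
def dividedAd (E : L) (n : ℕ) (T : L) : L :=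
  (n ! : K)⁻¹ • (ad K L E ^ n) T

theorem dividedAd_zero (E T : L) : dividedAd K E 0 T = T := by
  simp [dividedAd]

variable [CharZero K] {E F H T : L}

theorem lie_e_dividedAd (E : L) (n : ℕ) (T : L) :
    ⁅E, dividedAd K E n T⁆ = (n + 1 : K) • dividedAd K E (n + 1) T := by
  have h : (n + 1 : K) * ((n + 1)! : K)⁻¹ = (n ! : K)⁻¹ := by
    have := n.cast_add_one_ne_zero (R := K)
    rw [Nat.factorial_succ]
    push_cast
    field_simp
  rw [dividedAd, dividedAd, smul_smul, h, lie_smul, pow_succ', Module.End.mul_apply, ad_apply]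

theorem eq_dividedAd_of_lie_e {x : ℕ → L} (h_zero : x 0 = T)
    (h_succ : ∀ n, ⁅E, x n⁆ = (n + 1 : K) • x (n + 1)) (n : ℕ) : x n = dividedAd K E n T := by
  induction n with
  | zero => rw [h_zero, dividedAd_zero]
  | succ n ih =>
    rw [← smul_right_inj (n.cast_add_one_ne_zero (R := K)), ← h_succ, ih, lie_e_dividedAd]

theorem lie_h_dividedAd {a b : K} (hHE : ⁅H, E⁆ = a • E) (hHT : ⁅H, T⁆ = b • T) (n : ℕ) :
    ⁅H, dividedAd K E n T⁆ = (b + n * a) • dividedAd K E n T := by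
  induction n with
  | zero => simpa [dividedAd_zero] using hHT
  | succ n ih =>
    rw [← smul_right_inj (n.cast_add_one_ne_zero (R := K)), ← lie_smul, ← lie_e_dividedAd,
      leibniz_lie, hHE, ih, smul_lie, lie_smul, lie_e_dividedAd]
    push_cast
    module

theorem lie_f_dividedAd_succ {b : K} (hEF : ⁅E, F⁆ = H) (hHE : ⁅H, E⁆ = (2 : K) • E)
    (hHT : ⁅H, T⁆ = b • T) (hEFT : ⁅E, ⁅F, T⁆⁆ = 0) (n : ℕ) :
    ⁅F, dividedAd K E (n + 1) T⁆ = -(b + n) • dividedAd K E n T := by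
  have hFE : ⁅F, E⁆ = -H := by rw [← hEF, lie_skew]
  induction n with
  | zero =>
    have hET : dividedAd K E 1 T = ⁅E, T⁆ := by simp [dividedAd]
    rw [zero_add, hET, dividedAd_zero, leibniz_lie, hFE, hEFT, neg_lie, hHT]
    push_cast
    module
  | succ n ih =>
    rw [← smul_right_inj ((n + 1).cast_add_one_ne_zero (R := K)), ← lie_smul, ← lie_e_dividedAd,
      leibniz_lie, hFE, ih, neg_lie, lie_h_dividedAd hHE hHT, lie_smul, lie_e_dividedAd]
    push_cast
    module

theorem lie_dividedAd_dividedAd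
    (hT : ∀ j : ℕ, ⁅T, dividedAd K E j T⁆ = -(j : K) • dividedAd K E (j + 2) T) (i j : ℕ) :
    ⁅dividedAd K E i T, dividedAd K E j T⁆ = (i - j : K) • dividedAd K E (i + j + 2) T := by
  induction i generalizing j with
  | zero => simpa [dividedAd_zero] using hT j
  | succ i ih =>
    rw [← smul_right_inj (i.cast_add_one_ne_zero (R := K))]
    have h_raise : ⁅E, ⁅dividedAd K E i T, dividedAd K E j T⁆⁆ =
        (i - j : K) • (i + j + 3 : K) • dividedAd K E (i + j + 3) T := by
      rw [ih, lie_smul, lie_e_dividedAd]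
      push_cast
      module
    calc (i + 1 : K) • ⁅dividedAd K E (i + 1) T, dividedAd K E j T⁆
        = ⁅⁅E, dividedAd K E i T⁆, dividedAd K E j T⁆ := by rw [lie_e_dividedAd, smul_lie]
      _ = ⁅E, ⁅dividedAd K E i T, dividedAd K E j T⁆⁆ -
            (j + 1 : K) • ⁅dividedAd K E i T, dividedAd K E (j + 1) T⁆ := by
          rw [lie_lie, lie_e_dividedAd, lie_smul]
      _ = (i + 1 : K) • ((i + 1 : ℕ) - j : K) • dividedAd K E (i + 1 + j + 2) T := by
          rw [h_raise, ih, show i + (j + 1) + 2 = i + j + 3 by ring,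
            show i + 1 + j + 2 = i + j + 3 by ring]
          push_cast
          module

theorem lie_dividedAd_of_lie_dividedAd_succ (hEF : ⁅E, F⁆ = H) (hHE : ⁅H, E⁆ = (2 : K) • E)
    (hFT : ⁅F, T⁆ = (3 : K) • E) (hHT : ⁅H, T⁆ = (4 : K) • T) {n : ℕ}
    (h : ⁅T, dividedAd K E (n + 1) T⁆ = -((n + 1 : ℕ) : K) • dividedAd K E (n + 3) T) :
    ⁅T, dividedAd K E n T⁆ = -(n : K) • dividedAd K E (n + 2) T := by
  have hF := lie_f_dividedAd_succ hEF hHE hHT (by rw [hFT, lie_smul, lie_self, smul_zero])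
  have h_ne : (4 + n : K) ≠ 0 := by exact_mod_cast (by lia : 4 + n ≠ 0)
  rw [← smul_right_inj h_ne]
  calc (4 + n : K) • ⁅T, dividedAd K E n T⁆
      = -⁅T, ⁅F, dividedAd K E (n + 1) T⁆⁆ := by rw [hF, lie_smul]; module
    _ = ⁅⁅F, T⁆, dividedAd K E (n + 1) T⁆ - ⁅F, ⁅T, dividedAd K E (n + 1) T⁆⁆ := by
        rw [leibniz_lie F T]; abel
    _ = (4 + n : K) • -(n : K) • dividedAd K E (n + 2) T := by
        rw [h, hFT, smul_lie, lie_e_dividedAd, lie_smul, hF]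
        push_cast
        module

theorem lie_dividedAd_of_frequently (hEF : ⁅E, F⁆ = H) (hHE : ⁅H, E⁆ = (2 : K) • E)
    (hFT : ⁅F, T⁆ = (3 : K) • E) (hHT : ⁅H, T⁆ = (4 : K) • T)
    (h : ∃ᶠ n : ℕ in atTop, ⁅T, dividedAd K E n T⁆ = -(n : K) • dividedAd K E (n + 2) T) (n : ℕ) :
    ⁅T, dividedAd K E n T⁆ = -(n : K) • dividedAd K E (n + 2) T := by
  obtain ⟨m, hnm, hm⟩ := frequently_atTop.mp h n
  exact Nat.decreasingInduction
    (fun _ _ => lie_dividedAd_of_lie_dividedAd_succ hEF hHE hFT hHT) hm hnm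

end DividedAd

section WittExtension

variable {K L : Type*} [Field K] [LieRing L] [LieAlgebra K L]

variable (K) in
/-- The analogue of `IsWittGtModule` for a family in a Lie algebra over a field: `ρ` describes a
homomorphism out of `Witt_>` extending the one out of `sl(2)` given by `(E, F, H)`. -/
structure IsWittGtExtension (E F H : L) (ρ : ℤ → L) : Prop where
  neg_one : ρ (-1) = F
  zero : ρ 0 = (-(1 / 2) : K) • H
  one : ρ 1 = -E
  lie : ∀ i j : ℤ, -1 ≤ i → -1 ≤ j → ⁅ρ i, ρ j⁆ = ((i - j : ℤ) : K) • ρ (i + j)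

variable (K) in
/-- The only candidate for an extension of `(E, F, H)` to `Witt_>` with value `T` at `2`;
indices below `-1` carry no information and are sent to `F`. -/
def wittFamily (E F H T : L) : ℤ → L
  | .negSucc _ => F
  | 0 => (-(1 / 2) : K) • H
  | 1 => -E
  | (n + 2 : ℕ) => dividedAd K E n T

variable [CharZero K] {E F H T : L}

theorem IsWittGtExtension.eq_dividedAd {ρ : ℤ → L} (hρ : IsWittGtExtension K E F H ρ)
    (h_two : ρ 2 = T) (n : ℕ) : ρ (2 + n) = dividedAd K E n T := by
  refine eq_dividedAd_of_lie_e (x := fun n : ℕ => ρ (2 + n)) (by simpa using h_two) (fun n => ?_) n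
  have h := hρ.lie 1 (2 + n) (by lia) (by lia)
  rw [hρ.one, neg_lie, neg_eq_iff_eq_neg] at h
  rw [h, show (1 : ℤ) + (2 + n) = 2 + (n + 1 : ℕ) by lia]
  push_cast
  module

theorem IsWittGtExtension.lie_dividedAd {ρ : ℤ → L} (hρ : IsWittGtExtension K E F H ρ)
    (h_two : ρ 2 = T) (i j : ℕ) :
    ⁅dividedAd K E i T, dividedAd K E j T⁆ = (i - j : K) • dividedAd K E (i + j + 2) T := by
  simp only [← hρ.eq_dividedAd h_two]
  rw [hρ.lie _ _ (by lia) (by lia),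
    show (2 + i : ℤ) + (2 + j) = 2 + (i + j + 2 : ℕ) by lia]
  push_cast
  module

theorem lie_f_wittFamily (hEF : ⁅E, F⁆ = H) (hHE : ⁅H, E⁆ = (2 : K) • E)
    (hHF : ⁅H, F⁆ = (-2 : K) • F) (hFT : ⁅F, T⁆ = (3 : K) • E) (hHT : ⁅H, T⁆ = (4 : K) • T)
    {n : ℤ} (hn : -1 ≤ n) :
    ⁅F, wittFamily K E F H T n⁆ = (-1 - n : K) • wittFamily K E F H T (-1 + n) := by
  match n with
  | -1 =>
    change ⁅F, F⁆ = _
    simp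
  | 0 =>
    change ⁅F, (-(1 / 2) : K) • H⁆ = (_ : K) • F
    rw [lie_smul, ← lie_skew, hHF]
    push_cast
    module
  | 1 =>
    change ⁅F, -E⁆ = (_ : K) • (-(1 / 2) : K) • H
    rw [lie_neg, lie_skew, hEF]
    push_cast
    module
  | 2 =>
    change ⁅F, dividedAd K E 0 T⁆ = (_ : K) • -E
    rw [dividedAd_zero, hFT]
    push_cast
    module
  | (n + 3 : ℕ) =>
    rw [show (-1 + (n + 3 : ℕ) : ℤ) = (n + 2 : ℕ) by lia]
    change ⁅F, dividedAd K E (n + 1) T⁆ = (_ : K) • dividedAd K E n T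
    rw [lie_f_dividedAd_succ hEF hHE hHT (by rw [hFT, lie_smul, lie_self, smul_zero])]
    push_cast
    module

theorem lie_h_wittFamily (hHE : ⁅H, E⁆ = (2 : K) • E) (hHF : ⁅H, F⁆ = (-2 : K) • F)
    (hHT : ⁅H, T⁆ = (4 : K) • T) {n : ℤ} (hn : -1 ≤ n) :
    ⁅H, wittFamily K E F H T n⁆ = (2 * n : K) • wittFamily K E F H T n := by
  match n with
  | -1 =>
    change ⁅H, F⁆ = (_ : K) • F
    rw [hHF]
    push_cast
    module
  | 0 =>
    change ⁅H, (-(1 / 2) : K) • H⁆ = _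
    simp
  | 1 =>
    change ⁅H, -E⁆ = (_ : K) • -E
    rw [lie_neg, hHE]
    push_cast
    module
  | (n + 2 : ℕ) =>
    change ⁅H, dividedAd K E n T⁆ = (_ : K) • dividedAd K E n T
    rw [lie_h_dividedAd hHE hHT]
    push_cast
    module

theorem lie_e_wittFamily (hEF : ⁅E, F⁆ = H) (hHE : ⁅H, E⁆ = (2 : K) • E)
    {n : ℤ} (hn : -1 ≤ n) :
    ⁅E, wittFamily K E F H T n⁆ = (n - 1 : K) • wittFamily K E F H T (1 + n) := by
  match n with
  | -1 =>
    change ⁅E, F⁆ = (_ : K) • (-(1 / 2) : K) • H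
    rw [hEF]
    push_cast
    module
  | 0 =>
    change ⁅E, (-(1 / 2) : K) • H⁆ = (_ : K) • -E
    rw [lie_smul, ← lie_skew, hHE]
    push_cast
    module
  | 1 =>
    change ⁅E, -E⁆ = _
    simp
  | (n + 2 : ℕ) =>
    rw [show (1 + (n + 2 : ℕ) : ℤ) = (n + 3 : ℕ) by lia]
    change ⁅E, dividedAd K E n T⁆ = (_ : K) • dividedAd K E (n + 1) T
    rw [lie_e_dividedAd]
    push_cast
    module

theorem lie_wittFamily_of_lt_two (hEF : ⁅E, F⁆ = H) (hHE : ⁅H, E⁆ = (2 : K) • E)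
    (hHF : ⁅H, F⁆ = (-2 : K) • F) (hFT : ⁅F, T⁆ = (3 : K) • E) (hHT : ⁅H, T⁆ = (4 : K) • T)
    {i j : ℤ} (hi : -1 ≤ i) (hi' : i < 2) (hj : -1 ≤ j) :
    ⁅wittFamily K E F H T i, wittFamily K E F H T j⁆ =
      ((i - j : ℤ) : K) • wittFamily K E F H T (i + j) := by
  obtain rfl | rfl | rfl : i = -1 ∨ i = 0 ∨ i = 1 := by lia
  · change ⁅F, wittFamily K E F H T j⁆ = _
    rw [lie_f_wittFamily hEF hHE hHF hFT hHT hj]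
    push_cast
    rfl
  · change ⁅(-(1 / 2) : K) • H, wittFamily K E F H T j⁆ = _
    rw [smul_lie, lie_h_wittFamily hHE hHF hHT hj, zero_add]
    push_cast
    module
  · change ⁅-E, wittFamily K E F H T j⁆ = _
    rw [neg_lie, lie_e_wittFamily hEF hHE hj]
    push_cast
    module

theorem isWittGtExtension_wittFamily (hEF : ⁅E, F⁆ = H) (hHE : ⁅H, E⁆ = (2 : K) • E)
    (hHF : ⁅H, F⁆ = (-2 : K) • F) (hFT : ⁅F, T⁆ = (3 : K) • E) (hHT : ⁅H, T⁆ = (4 : K) • T)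
    (hT : ∀ i j : ℕ,
      ⁅dividedAd K E i T, dividedAd K E j T⁆ = (i - j : K) • dividedAd K E (i + j + 2) T) :
    IsWittGtExtension K E F H (wittFamily K E F H T) where
  neg_one := rfl
  zero := rfl
  one := rfl
  lie i j hi hj := by
    by_cases hi' : i < 2
    · exact lie_wittFamily_of_lt_two hEF hHE hHF hFT hHT hi hi' hj
    by_cases hj' : j < 2
    · rw [← lie_skew, lie_wittFamily_of_lt_two hEF hHE hHF hFT hHT hj hj' hi, add_comm j i,
        ← neg_smul, ← Int.cast_neg, neg_sub]
    obtain ⟨m, rfl⟩ : ∃ m : ℕ, i = (m + 2 : ℕ) := ⟨(i - 2).toNat, by lia⟩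
    obtain ⟨n, rfl⟩ : ∃ n : ℕ, j = (n + 2 : ℕ) := ⟨(j - 2).toNat, by lia⟩
    rw [show ((m + 2 : ℕ) + (n + 2 : ℕ) : ℤ) = (m + n + 2 + 2 : ℕ) by lia]
    change ⁅dividedAd K E m T, dividedAd K E n T⁆ = (_ : K) • dividedAd K E (m + n + 2) T
    rw [hT]
    push_cast
    module

theorem wittGt_extension_iff_general (hEF : ⁅E, F⁆ = H) (hHE : ⁅H, E⁆ = (2 : K) • E)
    (hHF : ⁅H, F⁆ = (-2 : K) • F) (hFT : ⁅F, T⁆ = (3 : K) • E) (hHT : ⁅H, T⁆ = (4 : K) • T) :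
    ((∃ ρ : ℤ → L, IsWittGtExtension K E F H ρ ∧ ρ 2 = T) ↔
      ∀ i j : ℕ, ⁅dividedAd K E i T, dividedAd K E j T⁆ =
        (i - j : K) • dividedAd K E (i + j + 2) T) ∧
    ((∀ i j : ℕ, ⁅dividedAd K E i T, dividedAd K E j T⁆ =
        (i - j : K) • dividedAd K E (i + j + 2) T) ↔
      ∃ N : ℕ, ∀ k : ℕ, N ≤ k → ⁅T, dividedAd K E (2 * k - 1) T⁆ =
        -((2 * k - 1 : ℕ) : K) • dividedAd K E (2 * k + 1) T) ∧
    ∀ ρ : ℤ → L, IsWittGtExtension K E F H ρ → ρ 2 = T →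
      ∀ i : ℕ, ρ (2 + i) = dividedAd K E i T := by
  refine ⟨⟨?_, fun hT => ?_⟩, ⟨fun hT => ⟨1, fun k hk => ?_⟩, ?_⟩,
    fun ρ hρ h_two => hρ.eq_dividedAd h_two⟩
  · rintro ⟨ρ, hρ, h_two⟩
    exact hρ.lie_dividedAd h_two
  · exact ⟨_, isWittGtExtension_wittFamily hEF hHE hHF hFT hHT hT, dividedAd_zero E T⟩
  · simpa [dividedAd_zero, show 2 * k - 1 + 2 = 2 * k + 1 by lia] using hT 0 (2 * k - 1)
  · rintro ⟨N, hN⟩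
    refine lie_dividedAd_dividedAd (lie_dividedAd_of_frequently hEF hHE hFT hHT ?_)
    refine frequently_atTop.mpr fun n => ⟨2 * (N + n + 1) - 1, by lia, ?_⟩
    exact hN (N + n + 1) (by lia)

end WittExtension

section Endomorphisms

variable {V : Type*} [AddCommGroup V] [Module ℂ V]

attribute [local instance] LieRing.ofAssociativeRing

theorem adPow_eq_ad_pow (A T : Module.End ℂ V) (n : ℕ) :
    adPow A n T = (ad ℂ (Module.End ℂ V) A ^ n) T := by
  rw [Module.End.pow_apply]
  rfl

theorem isWittGtModule_iff {E F H : Module.End ℂ V} {ρ : ℤ → Module.End ℂ V} :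
    IsWittGtModule E F H ρ ↔ IsWittGtExtension ℂ E F H ρ :=
  ⟨fun ⟨h_neg_one, h_zero, h_one, h_lie⟩ => ⟨h_neg_one, h_zero, h_one, h_lie⟩,
    fun h => ⟨h.neg_one, h.zero, h.one, h.lie⟩⟩

end Endomorphisms

/-- characterization of the endomorphisms `T` giving rise to a
Witt_>-module structure extending a given sl(2)-representation, together with
uniqueness and the explicit formula `ρ_{2+i} = (1/i!)·ad(E)^i(T)`. -/
theorem wittGt_extension_iff
    (V : Type*) [AddCommGroup V] [Module ℂ V]
    (E F H T : Module.End ℂ V)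
    (hEF : ⁅E, F⁆ = H) (hHE : ⁅H, E⁆ = (2 : ℂ) • E) (hHF : ⁅H, F⁆ = (-2 : ℂ) • F)
    (hFT : ⁅F, T⁆ = (3 : ℂ) • E) (hHT : ⁅H, T⁆ = (4 : ℂ) • T) :
    ((∃ ρ : ℤ → Module.End ℂ V, IsWittGtModule E F H ρ ∧ ρ 2 = T) ↔
      (∀ i j : ℕ,
        ⁅((Nat.factorial i : ℂ))⁻¹ • adPow E i T, ((Nat.factorial j : ℂ))⁻¹ • adPow E j T⁆ =
          ((i : ℂ) - (j : ℂ)) • (((Nat.factorial (i + j + 2) : ℂ))⁻¹ • adPow E (i + j + 2) T))) ∧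
    ((∀ i j : ℕ,
        ⁅((Nat.factorial i : ℂ))⁻¹ • adPow E i T, ((Nat.factorial j : ℂ))⁻¹ • adPow E j T⁆ =
          ((i : ℂ) - (j : ℂ)) • (((Nat.factorial (i + j + 2) : ℂ))⁻¹ • adPow E (i + j + 2) T)) ↔
      (∃ N : ℕ, ∀ k : ℕ, N ≤ k →
        ⁅T, ((Nat.factorial (2 * k - 1) : ℂ))⁻¹ • adPow E (2 * k - 1) T⁆ =
          (-(((2 * k - 1 : ℕ) : ℂ) / (Nat.factorial (2 * k + 1) : ℂ))) •
            adPow E (2 * k + 1) T)) ∧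
    (∀ ρ : ℤ → Module.End ℂ V, IsWittGtModule E F H ρ → ρ 2 = T →
      ∀ i : ℕ, ρ (2 + (i : ℤ)) = ((Nat.factorial i : ℂ))⁻¹ • adPow E i T) := by
  let _ : LieRing (Module.End ℂ V) := LieRing.ofAssociativeRing
  simpa only [isWittGtModule_iff, adPow_eq_ad_pow, dividedAd, smul_smul, div_eq_mul_inv,
    neg_mul] using wittGt_extension_iff_general hEF hHE hHF hFT hHT
end

section
/- Let (E,F,H) be a representation of sl(2,ℂ) on a complex vector space V and let S ∈ End(V) satisfy [E,S] = −3F and [H,S] = −4S. The following are equivalent: (1) there exists a Witt_<-module structure (ρ_i)_{i≤1} on V compatible with (E,F,H) such that ρ₋₂ = S; (2) for all integers i, j ≥ 0, [(1/i!)·ad(F)^i(S), (1/j!)·ad(F)^j(S)] = (j−i)·(1/(i+j+2)!)·ad(F)^{i+j+2}(S); (3) there exists N ∈ ℕ such that for all k ≥ N, [(1/(2k−1)!)·ad(F)^{2k−1}(S), S] = −((2k−1)/(2k+1)!)·ad(F)^{2k+1}(S). Moreover, in case (1) the structure is'unique and is given by ρ_{−(2+i)} = (1/i!)·ad(F)^i(S)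 for all i ≥ 0. -/
/-!
Write `Sₙ = ad(F)ⁿ(S) / n!`. Applying `ad F` to `ρ_{-(2+n)}` forces `ρ_{-(2+n)} = Sₙ`, so the only
candidate for the module structure is explicit, and `sl₂`-theory gives all its brackets with
`E`, `F`, `H`. It remains to compare `⁅Sᵢ, Sⱼ⁆` with `(j - i) • Sᵢ₊ⱼ₊₂`. Applying `ad F` propagates
these relations from `j = 0` to all `j`; applying `ad E` to the relation for `(n + 1, 0)` yields
`-(n + 4)` times the relation for `(n, 0)`, so that arbitrarily large `n` suffice.
-/

/-- A Witt_<-module structure on `V` compatible with the sl(2)-representation `(E,F,H)`: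
a family `ρ : ℤ → End(V)` with `ρ₋₁ = F`, `ρ₀ = −(1/2)H`, `ρ₁ = −E` and
`[ρ_i, ρ_j] = (i−j)·ρ_{i+j}` for all `i, j ≤ 1`. -/
def IsWittLtModule {V : Type*} [AddCommGroup V] [Module ℂ V]
    (E F H : Module.End ℂ V) (ρ : ℤ → Module.End ℂ V) : Prop :=
  ρ (-1) = F ∧ ρ 0 = (-(1/2) : ℂ) • H ∧ ρ 1 = -E ∧
    ∀ i j : ℤ, i ≤ 1 → j ≤ 1 → ⁅ρ i, ρ j⁆ = ((i - j : ℤ) : ℂ) • ρ (i + j)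

/-- The divided power `ad(x)ⁿ(y) / n!` of the adjoint action. -/
def adDivPow (K : Type*) {L : Type*} [Field K] [LieRing L] [LieAlgebra K L]
    (x : L) (n : ℕ) (y : L) : L :=
  (n.factorial : K)⁻¹ • (⁅x, ·⁆)^[n] y

/-- The analogue of `IsWittLtModule` for families in an arbitrary Lie algebra `L` in place of
`End(V)`. As there, the values `ρ i` for `i > 1` are unconstrained. -/
def IsWittLtFamily (K : Type*) {L : Type*} [Field K] [LieRing L] [LieAlgebra K L]
    (E F H : L) (ρ : ℤ → L) : Prop :=
  ρ (-1) = F ∧ ρ 0 = (-(1 / 2) : K) • H ∧ ρ 1 = -E ∧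
    ∀ i j : ℤ, i ≤ 1 → j ≤ 1 → ⁅ρ i, ρ j⁆ = ((i - j : ℤ) : K) • ρ (i + j)

/-- The only candidate for a Witt_<-module structure with `ρ₋₂ = S`, reindexed by
`n ↦ ρ_{1 - n}` so that the index set `i ≤ 1` becomes `ℕ`. -/
def wittSeq (K : Type*) {L : Type*} [Field K] [LieRing L] [LieAlgebra K L]
    (E F H S : L) : ℕ → L
  | 0 => -E
  | 1 => (-(1 / 2) : K) • H
  | 2 => F
  | n + 3 => adDivPow K F n S

section LieAlgebra

variable {K L : Type*} [Field K] [LieRing L] [LieAlgebra K L] {x y h E F H S : L}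

@[simp]
lemma adDivPow_zero (x y : L) : adDivPow K x 0 y = y := by
  simp [adDivPow]

lemma lie_adDivPow_of_eigenvector {a b : K} (hx : ⁅h, x⁆ = a • x) (hy : ⁅h, y⁆ = b • y) (n : ℕ) :
    ⁅h, adDivPow K x n y⁆ = (b + n * a) • adDivPow K x n y := by
  have lie_iterate : ⁅h, (⁅x, ·⁆)^[n] y⁆ = (b + n * a) • (⁅x, ·⁆)^[n] y := by
    induction n with
    | zero => simpa using hy
    | succ n ih =>
      rw [Function.iterate_succ_apply', leibniz_lie, hx, ih, smul_lie, lie_smul]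
      push_cast
      module
  rw [adDivPow, lie_smul, lie_iterate, smul_comm]

variable [CharZero K]

lemma lie_adDivPow (x y : L) (n : ℕ) :
    ⁅x, adDivPow K x n y⁆ = (n + 1 : K) • adDivPow K x (n + 1) y := by
  have hn : (n + 1 : K) ≠ 0 := n.cast_add_one_ne_zero
  rw [adDivPow, adDivPow, lie_smul, Function.iterate_succ_apply', smul_smul, Nat.factorial_succ,
    Nat.cast_mul, Nat.cast_add_one, mul_inv, mul_inv_cancel_left₀ hn]

lemma lie_adDivPow_succ_of_lie_lie_eq_zero {μ : K} (hEF : ⁅E, F⁆ = H)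
    (hHF : ⁅H, F⁆ = (-2 : K) • F) (hFEy : ⁅F, ⁅E, y⁆⁆ = 0) (hHy : ⁅H, y⁆ = μ • y) (n : ℕ) :
    ⁅E, adDivPow K F (n + 1) y⁆ = (μ - n) • adDivPow K F n y := by
  induction n with
  | zero =>
    have hFy : adDivPow K F 1 y = ⁅F, y⁆ := by simpa using (lie_adDivPow (K := K) F y 0).symm
    rw [hFy, leibniz_lie, hEF, hHy, hFEy]
    simp
  | succ n ih =>
    have hn : ((n + 1 : ℕ) + 1 : K) ≠ 0 := (n + 1).cast_add_one_ne_zero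
    apply smul_right_injective L hn
    beta_reduce
    rw [← lie_smul, ← lie_adDivPow, leibniz_lie, hEF, lie_adDivPow_of_eigenvector hHF hHy, ih,
      lie_smul, lie_adDivPow]
    push_cast
    module

lemma lie_adDivPow_succ (hEF : ⁅E, F⁆ = H) (hHF : ⁅H, F⁆ = (-2 : K) • F)
    (hES : ⁅E, S⁆ = (-3 : K) • F) (hHS : ⁅H, S⁆ = (-4 : K) • S) (n : ℕ) :
    ⁅E, adDivPow K F (n + 1) S⁆ = (-4 - n : K) • adDivPow K F n S :=
  lie_adDivPow_succ_of_lie_lie_eq_zero hEF hHF (by rw [hES, lie_smul, lie_self, smul_zero]) hHS n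

lemma adDivPow_lie_of_succ (hEF : ⁅E, F⁆ = H) (hHF : ⁅H, F⁆ = (-2 : K) • F)
    (hES : ⁅E, S⁆ = (-3 : K) • F) (hHS : ⁅H, S⁆ = (-4 : K) • S) {n : ℕ}
    (hn : ⁅adDivPow K F (n + 1) S, S⁆ = -((n + 1 : ℕ) : K) • adDivPow K F (n + 1 + 2) S) :
    ⁅adDivPow K F n S, S⁆ = -(n : K) • adDivPow K F (n + 2) S := by
  have lie_E_by_leibniz : ⁅E, ⁅adDivPow K F (n + 1) S, S⁆⁆ =
      (-4 - n : K) • ⁅adDivPow K F n S, S⁆ + (3 * (n + 2) : K) • adDivPow K F (n + 2) S := by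
    rw [leibniz_lie, lie_adDivPow_succ hEF hHF hES hHS, hES, smul_lie, lie_smul, ← lie_skew _ F,
      lie_adDivPow]
    push_cast
    module
  have lie_E_by_hn : ⁅E, ⁅adDivPow K F (n + 1) S, S⁆⁆ =
      ((n + 1) * (n + 6) : K) • adDivPow K F (n + 2) S := by
    rw [hn, lie_smul, show n + 1 + 2 = n + 2 + 1 from rfl, lie_adDivPow_succ hEF hHF hES hHS]
    push_cast
    module
  have hn4 : (-4 - n : K) ≠ 0 := by
    rw [← neg_add', neg_ne_zero]
    exact_mod_cast (by lia : 4 + n ≠ 0)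
  apply smul_right_injective L hn4
  beta_reduce
  rw [eq_sub_of_add_eq (lie_E_by_leibniz.symm.trans lie_E_by_hn)]
  module

lemma adDivPow_lie_of_le (hEF : ⁅E, F⁆ = H) (hHF : ⁅H, F⁆ = (-2 : K) • F)
    (hES : ⁅E, S⁆ = (-3 : K) • F) (hHS : ⁅H, S⁆ = (-4 : K) • S) {m n : ℕ} (hmn : m ≤ n)
    (hn : ⁅adDivPow K F n S, S⁆ = -(n : K) • adDivPow K F (n + 2) S) :
    ⁅adDivPow K F m S, S⁆ = -(m : K) • adDivPow K F (m + 2) S := by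
  induction hmn with
  | refl => exact hn
  | step _ ih => exact ih (adDivPow_lie_of_succ hEF hHF hES hHS hn)

lemma adDivPow_lie_adDivPow
    (h₀ : ∀ n : ℕ, ⁅adDivPow K x n y, y⁆ = -(n : K) • adDivPow K x (n + 2) y) (i j : ℕ) :
    ⁅adDivPow K x i y, adDivPow K x j y⁆ = (j - i : K) • adDivPow K x (i + j + 2) y := by
  induction j generalizing i with
  | zero => simpa using h₀ i
  | succ j ih =>
    have lie_x_by_leibniz : ⁅x, ⁅adDivPow K x i y, adDivPow K x j y⁆⁆ =
        ((i + 1) * (j - (i + 1)) : K) • adDivPow K x (i + j + 3) y +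
          (j + 1 : K) • ⁅adDivPow K x i y, adDivPow K x (j + 1) y⁆ := by
      rw [leibniz_lie, lie_adDivPow, lie_adDivPow, smul_lie, lie_smul, ih (i + 1), smul_smul,
        show i + 1 + j + 2 = i + j + 3 by lia, Nat.cast_add_one]
    have lie_x_by_ih : ⁅x, ⁅adDivPow K x i y, adDivPow K x j y⁆⁆ =
        ((j - i) * (i + j + 3) : K) • adDivPow K x (i + j + 3) y := by
      rw [ih i, lie_smul, lie_adDivPow, smul_smul]
      push_cast
      module
    apply smul_right_injective L (j.cast_add_one_ne_zero (R := K))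
    beta_reduce
    rw [eq_sub_of_add_eq' (lie_x_by_leibniz.symm.trans lie_x_by_ih),
      show i + (j + 1) + 2 = i + j + 3 by lia]
    push_cast
    module

lemma forall_adDivPow_lie_iff_eventually (hEF : ⁅E, F⁆ = H) (hHF : ⁅H, F⁆ = (-2 : K) • F)
    (hES : ⁅E, S⁆ = (-3 : K) • F) (hHS : ⁅H, S⁆ = (-4 : K) • S) :
    (∀ i j : ℕ, ⁅adDivPow K F i S, adDivPow K F j S⁆ =
        (j - i : K) • adDivPow K F (i + j + 2) S) ↔
      ∃ N : ℕ, ∀ k : ℕ, N ≤ k → ⁅adDivPow K F (2 * k - 1) S, S⁆ =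
        -((2 * k - 1 : ℕ) : K) • adDivPow K F (2 * k + 1) S := by
  have index_eq {k : ℕ} (hk : 1 ≤ k) : 2 * k - 1 + 2 = 2 * k + 1 := by lia
  constructor
  · intro hS
    refine ⟨1, fun k hk => ?_⟩
    simpa [index_eq hk] using hS (2 * k - 1) 0
  · rintro ⟨N, hN⟩
    refine adDivPow_lie_adDivPow fun n => ?_
    have hk : n ≤ 2 * (N + n + 1) - 1 := by lia
    refine adDivPow_lie_of_le hEF hHF hES hHS hk ?_
    rw [hN (N + n + 1) (by lia), index_eq (by lia)]

lemma wittSeq_zero_lie_succ (hEF : ⁅E, F⁆ = H) (hHE : ⁅H, E⁆ = (2 : K) • E)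
    (hHF : ⁅H, F⁆ = (-2 : K) • F) (hES : ⁅E, S⁆ = (-3 : K) • F) (hHS : ⁅H, S⁆ = (-4 : K) • S) :
    ∀ n : ℕ, ⁅wittSeq K E F H S 0, wittSeq K E F H S (n + 1)⁆ =
      (n + 1 : K) • wittSeq K E F H S n
  | 0 => by
    simp only [wittSeq, neg_lie, lie_smul]
    rw [← lie_skew, hHE]
    push_cast
    module
  | 1 => by
    simp only [wittSeq, neg_lie, hEF]
    push_cast
    module
  | 2 => by
    simp only [wittSeq, neg_lie, adDivPow_zero, hES]
    push_cast
    module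
  | n + 3 => by
    simp only [wittSeq, neg_lie, lie_adDivPow_succ hEF hHF hES hHS]
    push_cast
    module

lemma wittSeq_one_lie (hHF : ⁅H, F⁆ = (-2 : K) • F) (hHS : ⁅H, S⁆ = (-4 : K) • S) :
    ∀ n : ℕ, ⁅wittSeq K E F H S 1, wittSeq K E F H S (n + 2)⁆ =
      (n + 1 : K) • wittSeq K E F H S (n + 2)
  | 0 => by
    simp only [wittSeq, smul_lie, hHF]
    push_cast
    module
  | n + 1 => by
    simp only [wittSeq, smul_lie, lie_adDivPow_of_eigenvector hHF hHS]
    push_cast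
    module

lemma wittSeq_lie_of_lt (hEF : ⁅E, F⁆ = H) (hHE : ⁅H, E⁆ = (2 : K) • E)
    (hHF : ⁅H, F⁆ = (-2 : K) • F) (hES : ⁅E, S⁆ = (-3 : K) • F) (hHS : ⁅H, S⁆ = (-4 : K) • S)
    (hS : ∀ i j : ℕ, ⁅adDivPow K F i S, adDivPow K F j S⁆ =
      (j - i : K) • adDivPow K F (i + j + 2) S) :
    ∀ {a b : ℕ}, a < b → ⁅wittSeq K E F H S a, wittSeq K E F H S b⁆ =
      (b - a : K) • wittSeq K E F H S (a + b - 1)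
  | 0, n + 1, _ => by
    rw [wittSeq_zero_lie_succ hEF hHE hHF hES hHS, show 0 + (n + 1) - 1 = n by lia]
    push_cast
    module
  | 1, n + 2, _ => by
    rw [wittSeq_one_lie hHF hHS, show 1 + (n + 2) - 1 = n + 2 by lia]
    push_cast
    module
  | 2, n + 3, _ => by
    rw [show 2 + (n + 3) - 1 = n + 1 + 3 by lia]
    simp only [wittSeq, lie_adDivPow]
    push_cast
    module
  | m + 3, n + 3, _ => by
    rw [show m + 3 + (n + 3) - 1 = m + n + 2 + 3 by lia]
    simp only [wittSeq, hS]
    push_cast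
    module

lemma wittSeq_lie (hEF : ⁅E, F⁆ = H) (hHE : ⁅H, E⁆ = (2 : K) • E)
    (hHF : ⁅H, F⁆ = (-2 : K) • F) (hES : ⁅E, S⁆ = (-3 : K) • F) (hHS : ⁅H, S⁆ = (-4 : K) • S)
    (hS : ∀ i j : ℕ, ⁅adDivPow K F i S, adDivPow K F j S⁆ =
      (j - i : K) • adDivPow K F (i + j + 2) S) (a b : ℕ) :
    ⁅wittSeq K E F H S a, wittSeq K E F H S b⁆ =
      (b - a : K) • wittSeq K E F H S (a + b - 1) := by
  rcases lt_trichotomy a b with hab | rfl | hba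
  · exact wittSeq_lie_of_lt hEF hHE hHF hES hHS hS hab
  · rw [lie_self, sub_self, zero_smul]
  · rw [← lie_skew, wittSeq_lie_of_lt hEF hHE hHF hES hHS hS hba, add_comm b a, ← neg_smul, neg_sub]

lemma isWittLtFamily_wittSeq (hEF : ⁅E, F⁆ = H) (hHE : ⁅H, E⁆ = (2 : K) • E)
    (hHF : ⁅H, F⁆ = (-2 : K) • F) (hES : ⁅E, S⁆ = (-3 : K) • F) (hHS : ⁅H, S⁆ = (-4 : K) • S)
    (hS : ∀ i j : ℕ, ⁅adDivPow K F i S, adDivPow K F j S⁆ =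
      (j - i : K) • adDivPow K F (i + j + 2) S) :
    IsWittLtFamily K E F H fun i : ℤ => wittSeq K E F H S (1 - i).toNat := by
  refine ⟨rfl, rfl, rfl, fun i j hi hj => ?_⟩
  obtain ⟨a, rfl⟩ : ∃ a : ℕ, i = 1 - a := ⟨(1 - i).toNat, by lia⟩
  obtain ⟨b, rfl⟩ : ∃ b : ℕ, j = 1 - b := ⟨(1 - j).toNat, by lia⟩
  have toNat_index (c : ℕ) : (1 - (1 - c : ℤ)).toNat = c := by lia
  have toNat_index_add : (1 - (1 - a + (1 - b) : ℤ)).toNat = a + b - 1 := by lia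
  simp only [toNat_index, toNat_index_add, wittSeq_lie hEF hHE hHF hES hHS hS]
  push_cast
  module

lemma IsWittLtFamily.apply_neg_two_add {ρ : ℤ → L} (hρ : IsWittLtFamily K E F H ρ) (n : ℕ) :
    ρ (-(2 + n)) = adDivPow K F n (ρ (-2)) := by
  obtain ⟨hF, -, -, hlie⟩ := hρ
  induction n with
  | zero => simp
  | succ n ih =>
    apply smul_right_injective L (n.cast_add_one_ne_zero (R := K))
    beta_reduce
    rw [← lie_adDivPow, ← ih, ← hF, hlie _ _ (by lia) (by lia),
      show (-1 + -(2 + n) : ℤ) = -(2 + (n + 1 : ℕ)) by lia]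
    push_cast
    module

lemma IsWittLtFamily.adDivPow_lie {ρ : ℤ → L} (hρ : IsWittLtFamily K E F H ρ) (i j : ℕ) :
    ⁅adDivPow K F i (ρ (-2)), adDivPow K F j (ρ (-2))⁆ =
      (j - i : K) • adDivPow K F (i + j + 2) (ρ (-2)) := by
  simp only [← hρ.apply_neg_two_add]
  rw [hρ.2.2.2 _ _ (by lia) (by lia),
    show (-(2 + i) + -(2 + j) : ℤ) = -(2 + (i + j + 2 : ℕ)) by lia]
  push_cast
  module

theorem wittLt_extension_iff_general (hEF : ⁅E, F⁆ = H) (hHE : ⁅H, E⁆ = (2 : K) • E)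
    (hHF : ⁅H, F⁆ = (-2 : K) • F) (hES : ⁅E, S⁆ = (-3 : K) • F) (hHS : ⁅H, S⁆ = (-4 : K) • S) :
    ((∃ ρ : ℤ → L, IsWittLtFamily K E F H ρ ∧ ρ (-2) = S) ↔
      ∀ i j : ℕ, ⁅adDivPow K F i S, adDivPow K F j S⁆ =
        (j - i : K) • adDivPow K F (i + j + 2) S) ∧
    ((∀ i j : ℕ, ⁅adDivPow K F i S, adDivPow K F j S⁆ =
        (j - i : K) • adDivPow K F (i + j + 2) S) ↔
      ∃ N : ℕ, ∀ k : ℕ, N ≤ k → ⁅adDivPow K F (2 * k - 1) S, S⁆ =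
        -((2 * k - 1 : ℕ) : K) • adDivPow K F (2 * k + 1) S) ∧
    ∀ ρ : ℤ → L, IsWittLtFamily K E F H ρ → ρ (-2) = S →
      ∀ i : ℕ, ρ (-(2 + i)) = adDivPow K F i S := by
  refine ⟨⟨?_, fun hS => ⟨_, isWittLtFamily_wittSeq hEF hHE hHF hES hHS hS, adDivPow_zero F S⟩⟩,
    forall_adDivPow_lie_iff_eventually hEF hHF hES hHS, ?_⟩
  · rintro ⟨ρ, hρ, rfl⟩
    exact hρ.adDivPow_lie
  · rintro ρ hρ rfl
    exact hρ.apply_neg_two_add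

end LieAlgebra

/-- characterization of the endomorphisms `S` giving rise to a
Witt_<-module structure extending a given sl(2)-representation, together with
uniqueness and the explicit formula `ρ_{−(2+i)} = (1/i!)·ad(F)^i(S)`. -/
theorem wittLt_extension_iff
    (V : Type*) [AddCommGroup V] [Module ℂ V]
    (E F H S : Module.End ℂ V)
    (hEF : ⁅E, F⁆ = H) (hHE : ⁅H, E⁆ = (2 : ℂ) • E) (hHF : ⁅H, F⁆ = (-2 : ℂ) • F)
    (hES : ⁅E, S⁆ = (-3 : ℂ) • F) (hHS : ⁅H, S⁆ = (-4 : ℂ) • S) :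
    ((∃ ρ : ℤ → Module.End ℂ V, IsWittLtModule E F H ρ ∧ ρ (-2) = S) ↔
      (∀ i j : ℕ,
        ⁅((Nat.factorial i : ℂ))⁻¹ • adPow F i S, ((Nat.factorial j : ℂ))⁻¹ • adPow F j S⁆ =
          ((j : ℂ) - (i : ℂ)) • (((Nat.factorial (i + j + 2) : ℂ))⁻¹ • adPow F (i + j + 2) S))) ∧
    ((∀ i j : ℕ,
        ⁅((Nat.factorial i : ℂ))⁻¹ • adPow F i S, ((Nat.factorial j : ℂ))⁻¹ • adPow F j S⁆ =
          ((j : ℂ) - (i : ℂ)) • (((Nat.factorial (i + j + 2) : ℂ))⁻¹ • adPow F (i + j + 2) S)) ↔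
      (∃ N : ℕ, ∀ k : ℕ, N ≤ k →
        ⁅((Nat.factorial (2 * k - 1) : ℂ))⁻¹ • adPow F (2 * k - 1) S, S⁆ =
          (-(((2 * k - 1 : ℕ) : ℂ) / (Nat.factorial (2 * k + 1) : ℂ))) •
            adPow F (2 * k + 1) S)) ∧
    (∀ ρ : ℤ → Module.End ℂ V, IsWittLtModule E F H ρ → ρ (-2) = S →
      ∀ i : ℕ, ρ (-(2 + (i : ℤ))) = ((Nat.factorial i : ℂ))⁻¹ • adPow F i S) := by
  let : LieRing (Module.End ℂ V) := LieRing.ofAssociativeRing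
  simpa only [adDivPow, smul_smul, ← neg_div, ← div_eq_mul_inv] using!
    wittLt_extension_iff_general hEF hHE hHF hES hHS
end

section
/- Let (E,F,H) be a representation of sl(2,ℂ) on a complex vector space V with not all of E, F, H equal to zero. Let (ρ^>_i)_{i≥−1} be a Witt_>-module structure on V compatible with (E,F,H) and let (ρ^<_i)_{i≤1} be a Witt_<-module structure on V compatible with (E,F,H); set T = ρ^>₂ and S = ρ^<₋₂. Then there exists a Witt-module structure (ρ_i)_{i∈ℤ} on V compatible with (E,F,H) with ρ_i = ρ^>_i for all i ≥ −1 and ρ_i = ρ^<_i for all i ≤ 1 if and only if [S,T] = 2H. -/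
/-- Witt-module structure compatible with `(E,F,H)`. -/
def IsWittModule {V : Type*} [AddCommGroup V] [Module ℂ V]
    (E F H : Module.End ℂ V) (ρ : ℤ → Module.End ℂ V) : Prop :=
  ρ (-1) = F ∧ ρ 0 = (-(1/2) : ℂ) • H ∧ ρ 1 = -E ∧
    ∀ i j : ℤ, ⁅ρ i, ρ j⁆ = ((i - j : ℤ) : ℂ) • ρ (i + j)

/-!
Applying the derivation `⁅x a, ·⁆` to the Witt relation `⁅x m, x n⁆ = (m - n) • x (m + n)` deduces
the relation at `(m, a + n)` from those at `(m, n)` and `(a + m, n)`, up to cancelling the factor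
`a - n`. All Witt relations that involve an index `a = 1` or `a = -1` hold by the two half families.
Hence the relation at `(-2, 2)` spreads with `a = 1` to all `(-2, n)` with `n ≥ 2` and then with
`a = -1` to all `(m, n)` with `m ≤ -2` and `n ≥ 2`, which up to antisymmetry are the relations that
neither half family contains. The remaining condition `⁅x (-2), x 2⁆ = -4 • x 0` is
`⁅S, T⁆ = 2 • H`, because `x 0 = -H / 2`.
-/

open Set

section LieRing

variable {L : Type*} [LieRing L] {x y z : ℤ → L} {s : Set ℤ}

/-- The defining relation of the Witt algebra for the members of index `i` and `j` of a family in a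
Lie ring, which need not be an algebra: the coefficient acts as an integer multiple. -/
def WittRel (x : ℤ → L) (i j : ℤ) : Prop :=
  ⁅x i, x j⁆ = (i - j) • x (i + j)

/-- The Witt relations for all pairs of indices in `s`. The index `i + j` may lie outside
`s`; for `s = [-1, ∞)` and `s = (-∞, 1]` this happens only where the coefficient `i - j` of
`x (i + j)` vanishes. -/
def IsWittOn (s : Set ℤ) (x : ℤ → L) : Prop :=
  ∀ i ∈ s, ∀ j ∈ s, WittRel x i j

theorem wittRel_iff_intCast_smul (R : Type*) [Ring R] [Module R L] {i j : ℤ} :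
    WittRel x i j ↔ ⁅x i, x j⁆ = ((i - j : ℤ) : R) • x (i + j) := by
  rw [Int.cast_smul_eq_zsmul, WittRel]

theorem wittRel_neg_two_two_iff (hzx : EqOn z x (Ici (-1))) (hzy : EqOn z y (Iic 1)) :
    WittRel z (-2) 2 ↔ ⁅y (-2), x 2⁆ = (-4 : ℤ) • x 0 := by
  have h2 : z 2 = x 2 := hzx (by simp)
  have h0 : z 0 = x 0 := hzx (by simp)
  have hneg : z (-2) = y (-2) := hzy (by simp)
  norm_num [WittRel, h2, h0, hneg]

namespace WittRel

theorem symm {i j : ℤ} (h : WittRel x i j) : WittRel x j i := by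
  rw [WittRel, ← lie_skew, h, ← neg_smul, neg_sub, add_comm]

theorem add_right [IsAddTorsionFree L] {a m n : ℤ} (ha : ∀ k, WittRel x a k)
    (hmn : WittRel x m n) (hamn : WittRel x (a + m) n) (hne : a ≠ n) :
    WittRel x m (a + n) := by
  unfold WittRel at *
  have leibniz : (m - n) • (a - (m + n)) • x (a + (m + n)) =
      (a - m) • (a + m - n) • x (a + m + n) + (a - n) • ⁅x m, x (a + n)⁆ := by
    simpa only [hmn, ha, hamn, lie_zsmul, zsmul_lie] using leibniz_lie (x a) (x m) (x n)
  refine zsmul_right_injective (sub_ne_zero.mpr hne) ?_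
  calc (a - n) • ⁅x m, x (a + n)⁆
      = (m - n) • (a - (m + n)) • x (a + (m + n)) - (a - m) • (a + m - n) • x (a + m + n) :=
        eq_sub_of_add_eq' leibniz.symm
    _ = (a - n) • (m - (a + n)) • x (m + (a + n)) := by
        rw [add_assoc a, add_left_comm m]
        module

end WittRel

namespace IsWittOn

theorem congr (hx : IsWittOn s x) (hzx : EqOn z x s)
    (hs : ∀ i ∈ s, ∀ j ∈ s, i ≠ j → i + j ∈ s) : IsWittOn s z := by
  intro i hi j hj
  rcases eq_or_ne i j with rfl | hij
  · simp [WittRel]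
  · rw [WittRel, hzx hi, hzx hj, hzx (hs i hi j hj hij), hx i hi j hj]

theorem wittRel_of_mem_Icc (hpos : IsWittOn (Ici (-1)) x) (hneg : IsWittOn (Iic 1) x) {a : ℤ}
    (ha : a ∈ Icc (-1) 1) (k : ℤ) : WittRel x a k := by
  rcases le_total (-1) k with hk | hk
  · exact hpos a ha.1 k hk
  · exact hneg a ha.2 k (hk.trans (by norm_num))

theorem wittRel_of_le_of_ge [IsAddTorsionFree L] (hpos : IsWittOn (Ici (-1)) x)
    (hneg : IsWittOn (Iic 1) x) (h : WittRel x (-2) 2) {m n : ℤ} (hm : m ≤ -2) (hn : 2 ≤ n) :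
    WittRel x m n := by
  have rel_one := hpos.wittRel_of_mem_Icc hneg (a := 1) (by simp)
  have rel_neg_one := hpos.wittRel_of_mem_Icc hneg (a := -1) (by simp)
  induction m, hm using Int.leInductionDown generalizing n with
  | base =>
    induction n, hn using Int.leInduction with
    | base => exact h
    | succ n hn ih =>
      rw [add_comm]
      exact ih.add_right rel_one (rel_neg_one n) (by lia)
  | pred m hm ih =>
    have rel_pred : WittRel x (-1 + n) m := by
      rcases hn.eq_or_lt with rfl | hn
      · exact rel_one m
      · exact (ih (by lia)).symm
    rw [sub_eq_neg_add]
    exact ((ih hn).symm.add_right rel_neg_one rel_pred (by lia)).symm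

theorem univ_of_wittRel [IsAddTorsionFree L] (hpos : IsWittOn (Ici (-1)) x)
    (hneg : IsWittOn (Iic 1) x) (h : WittRel x (-2) 2) : IsWittOn univ x := by
  have of_le {i j : ℤ} (hij : i ≤ j) : WittRel x i j := by
    by_cases hi : -1 ≤ i
    · exact hpos i hi j (hi.trans hij)
    by_cases hj : j ≤ 1
    · exact hneg i (hij.trans hj) j hj
    · exact hpos.wittRel_of_le_of_ge hneg h (by lia) (by lia)
  exact fun i _ j _ ↦ (le_total i j).elim of_le fun hji ↦ (of_le hji).symm

end IsWittOn

theorem witt_gluing_iff_general [IsAddTorsionFree L] (hx : IsWittOn (Ici (-1)) x)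
    (hy : IsWittOn (Iic 1) y) (hxy : EqOn x y (Icc (-1) 1)) :
    (∃ z, IsWittOn univ z ∧ EqOn z x (Ici (-1)) ∧ EqOn z y (Iic 1)) ↔
      ⁅y (-2), x 2⁆ = (-4 : ℤ) • x 0 := by
  constructor
  · rintro ⟨z, hz, hzx, hzy⟩
    exact (wittRel_neg_two_two_iff hzx hzy).mp (hz (-2) trivial 2 trivial)
  · intro h
    let z := (Ici (-1)).piecewise x y
    have hzx : EqOn z x (Ici (-1)) := piecewise_eqOn _ _ _
    have hzy : EqOn z y (Iic 1) := fun i hi ↦ by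
      by_cases hi' : i ∈ Ici (-1)
      · exact (hzx hi').trans (hxy ⟨hi', hi⟩)
      · exact piecewise_eq_of_notMem _ _ _ hi'
    refine ⟨z, (hx.congr hzx ?_).univ_of_wittRel (hy.congr hzy ?_)
      ((wittRel_neg_two_two_iff hzx hzy).mpr h), hzx, hzy⟩
    · simp only [mem_Ici]
      lia
    · simp only [mem_Iic]
      lia

end LieRing

section Module

attribute [local instance] LieRing.ofAssociativeRing

variable {V : Type*} [AddCommGroup V] [Module ℂ V] {E F H : Module.End ℂ V}
  {ρ ρg ρl : ℤ → Module.End ℂ V}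

theorem IsWittLtModule.isWittOn (hl : IsWittLtModule E F H ρl) : IsWittOn (Iic 1) ρl :=
  fun i hi j hj ↦ (wittRel_iff_intCast_smul ℂ).mpr (hl.2.2.2 i j hi hj)

namespace IsWittGtModule

theorem isWittOn (hg : IsWittGtModule E F H ρg) : IsWittOn (Ici (-1)) ρg :=
  fun i hi j hj ↦ (wittRel_iff_intCast_smul ℂ).mpr (hg.2.2.2 i j hi hj)

theorem eqOn_Icc (hg : IsWittGtModule E F H ρg) (hl : IsWittLtModule E F H ρl) :
    EqOn ρg ρl (Icc (-1) 1) := by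
  rintro i ⟨hi, hi'⟩
  interval_cases i
  · exact hg.1.trans hl.1.symm
  · exact hg.2.1.trans hl.2.1.symm
  · exact hg.2.2.1.trans hl.2.2.1.symm

theorem isWittModule_iff (hg : IsWittGtModule E F H ρg) (hρ : EqOn ρ ρg (Ici (-1))) :
    IsWittModule E F H ρ ↔ IsWittOn univ ρ := by
  have hF : ρ (-1) = F := (hρ (by simp)).trans hg.1
  have hH : ρ 0 = (-(1 / 2) : ℂ) • H := (hρ (by simp)).trans hg.2.1
  have hE : ρ 1 = -E := (hρ (by simp)).trans hg.2.2.1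
  simp only [IsWittModule, IsWittOn, hF, hH, hE, wittRel_iff_intCast_smul ℂ, mem_univ, true_and,
    forall_true_left]

theorem neg_four_zsmul_zero (hg : IsWittGtModule E F H ρg) :
    (-4 : ℤ) • ρg 0 = (2 : ℂ) • H := by
  rw [hg.2.1]
  module

end IsWittGtModule

end Module

/-- a Witt_>-structure and a Witt_<-structure extending a non trivial
sl(2)-representation glue to a Witt-module structure if and only if `[S,T] = 2H`,
where `T = ρ^>₂` and `S = ρ^<₋₂`. -/
theorem witt_gluing_iff
    (V : Type*) [AddCommGroup V] [Module ℂ V]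
    (E F H : Module.End ℂ V)
    (hEF : ⁅E, F⁆ = H) (hHE : ⁅H, E⁆ = (2 : ℂ) • E) (hHF : ⁅H, F⁆ = (-2 : ℂ) • F)
    (hnt : ¬ (E = 0 ∧ F = 0 ∧ H = 0))
    (ρg ρl : ℤ → Module.End ℂ V)
    (hg : IsWittGtModule E F H ρg) (hl : IsWittLtModule E F H ρl) :
    (∃ ρ : ℤ → Module.End ℂ V, IsWittModule E F H ρ ∧
        (∀ i : ℤ, -1 ≤ i → ρ i = ρg i) ∧ (∀ i : ℤ, i ≤ 1 → ρ i = ρl i)) ↔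
      ⁅ρl (-2), ρg 2⁆ = (2 : ℂ) • H := by
  let := LieRing.ofAssociativeRing (A := Module.End ℂ V)
  have : IsAddTorsionFree (Module.End ℂ V) := .of_isTorsionFree ℂ _
  rw [← hg.neg_four_zsmul_zero,
    ← witt_gluing_iff_general hg.isWittOn hl.isWittOn (hg.eqOn_Icc hl)]
  exact exists_congr fun ρ ↦ and_congr_left fun hρ ↦ hg.isWittModule_iff hρ.1
end

section
/- Fix μ₀, τ ∈ ℂ with τ ≠ (μ+1)² for all μ ∈ ξ = μ₀+2ℤ. Let V be a complex vector space with a representation (E,F,H) of sl(2,ℂ) such that V is the internal direct sum of its weight spaces V_μ = ker(H − μ·id) for μ ∈ ξ, each V_μ is finite dimensional, and (c − τ) is nilpotent on each V_μ, where c = (H + id)² + 4F∘E is the Casimir operator. Let K ∈ End(V) satisfy K∘K = c and [K,E] = [K,F] = [K,H] = 0 (a square root of the Casimir commuting with the sl(2)-action). Then there exists a Witt_>-module structure (ρ_i)_{i≥−1} on V compatible with (E,F,H) such that c commutes with ρ_i for every i ≥ −1, i.e., the Casimir operator is central for the extended action. -/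
/-!
Let `x`, `h`, `y` be the operators `t`, `t∂`, `-∂ + l t⁻¹` with `l` central. Then the operators
`-xⁿ(h + n l) = -(tⁿ⁺¹∂ + n l tⁿ)` for `n ≥ 0`, together with `y` for `n = -1`, satisfy the Witt
relations, and checking this uses only the commutation rules of `h`, `x`, `l`, `y` and the values
of `y x` and `x y`; in particular `x` need not be invertible.

Given a square root `K` of the Casimir operator, take `h = H / 2` and `y = F`, as `ρ₀ = -H / 2` and
`ρ₋₁ = F` demand, and `l = (1 + K) / 2`; then `ρ₁ = -x(h + l) = -E` asks for
`x = 2E(H + 1 + K)⁻¹`. The factorizations `4FE = (K - (H + 1))(H + 1 + K)` and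
`4EF = (K - (H - 1))(H - 1 + K)` give the products `y x` and `x y` as soon as `H ± 1 + K` are
invertible. They are, because `(H ± 1)² - K² = (H ± 1 + K)(H ± 1 - K)` has only the nonzero
generalized eigenvalues `(μ ± 1)² - τ`.
-/

section InvertibleEndomorphisms

variable {R 𝕜 V : Type*} [CommRing R] [Field 𝕜] [AddCommGroup V] [Module R V] [Module 𝕜 V]

theorem maxGenEigenspace_le_range (f : Module.End R V) {a : R} (ha : IsUnit a) :
    f.maxGenEigenspace a ≤ LinearMap.range f := by
  intro v hv
  obtain ⟨n, hn⟩ := (f.mem_maxGenEigenspace a v).mp hv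
  clear hv
  induction n generalizing v with
  | zero =>
    rw [pow_zero, Module.End.one_apply] at hn
    exact hn ▸ zero_mem _
  | succ n ih =>
    rw [pow_succ, Module.End.mul_apply] at hn
    have hav : a • v ∈ LinearMap.range f := by
      simpa using sub_mem (LinearMap.mem_range_self f v) (ih hn)
    exact (Submodule.smul_mem_iff_of_isUnit _ ha).mp hav

theorem maxGenEigenspace_le_maxGenEigenspace_mul_self (f : Module.End R V) (a : R) :
    f.maxGenEigenspace a ≤ (f * f).maxGenEigenspace (a ^ 2) := by
  intro v hv
  rw [Module.End.mem_maxGenEigenspace] at hv ⊢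
  obtain ⟨n, hn⟩ := hv
  have hcomm : Commute f (a • 1) := (Commute.one_right f).smul_right a
  have hfactor : f * f - a ^ 2 • 1 = (f + a • 1) * (f - a • 1) := by
    rw [← hcomm.mul_self_sub_mul_self_eq, smul_mul_smul_comm, mul_one, sq]
  have hcomm' : Commute (f + a • 1) (f - a • 1) :=
    ((Commute.refl f).add_left hcomm.symm).sub_right (hcomm.add_left (.refl _))
  exact ⟨n, by rw [hfactor, hcomm'.mul_pow, Module.End.mul_apply, hn, map_zero]⟩

theorem maxGenEigenspace_inf_le_sub {f g : Module.End R V} (hfg : Commute f g) (a b : R) :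
    f.maxGenEigenspace a ⊓ g.maxGenEigenspace b ≤ (f - g).maxGenEigenspace (a - b) := by
  have hneg : g.maxGenEigenspace b ≤ (-g).maxGenEigenspace (-b) := by
    simpa only [neg_smul, one_smul, neg_mul, one_mul] using g.genEigenspace_le_smul b (-1) ⊤
  rw [sub_eq_add_neg, sub_eq_add_neg]
  exact (inf_le_inf_left _ hneg).trans
    (Module.End.genEigenspace_inf_le_add f (-g) a (-b) ⊤ ⊤ hfg.neg_right)

theorem maxGenEigenspace_add_smul_one (f : Module.End R V) (a s : R) :
    (f + s • 1).maxGenEigenspace (a + s) = f.maxGenEigenspace a := by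
  ext v
  simp only [Module.End.mem_maxGenEigenspace, add_smul, add_sub_add_right_eq_sub]

theorem isUnit_of_iSup_maxGenEigenspace_eq_top {f : Module.End 𝕜 V}
    (hf : ⨆ a ≠ 0, f.maxGenEigenspace a = ⊤) : IsUnit f := by
  have hinj : LinearMap.ker f = ⊥ := by
    have hdisj := f.independent_maxGenEigenspace 0
    rw [hf, disjoint_top] at hdisj
    rw [eq_bot_iff, ← hdisj, ← f.eigenspace_zero]
    exact f.genEigenspace_le_maximal 0 1
  have hsurj : LinearMap.range f = ⊤ :=
    top_le_iff.mp (hf ▸ iSup₂_le fun _ ha => maxGenEigenspace_le_range f ha.isUnit)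
  exact (Module.End.isUnit_iff f).mpr
    ⟨LinearMap.ker_eq_bot.mp hinj, LinearMap.range_eq_top.mp hsurj⟩

theorem isUnit_add_of_iSup_maxGenEigenspace_eq_top {ι : Type*} {G K : Module.End 𝕜 V}
    (hGK : Commute G K) {τ : 𝕜} (hK : (K * K).maxGenEigenspace τ = ⊤) {a : ι → 𝕜}
    (hG : ⨆ i, G.maxGenEigenspace (a i) = ⊤) (hτ : ∀ i, τ ≠ a i ^ 2) : IsUnit (G + K) := by
  have hGG : Commute (G * G) K := hGK.mul_left hGK
  have hunit : IsUnit (G * G - K * K) := by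
    refine isUnit_of_iSup_maxGenEigenspace_eq_top (top_le_iff.mp (hG ▸ iSup_le fun i => ?_))
    calc G.maxGenEigenspace (a i)
        ≤ (G * G).maxGenEigenspace (a i ^ 2) ⊓ (K * K).maxGenEigenspace τ :=
          le_inf (maxGenEigenspace_le_maxGenEigenspace_mul_self G (a i)) (hK ▸ le_top)
      _ ≤ (G * G - K * K).maxGenEigenspace (a i ^ 2 - τ) :=
          maxGenEigenspace_inf_le_sub (hGG.mul_right hGG) _ _
      _ ≤ ⨆ b ≠ 0, (G * G - K * K).maxGenEigenspace b :=
          le_iSup₂_of_le _ (sub_ne_zero.mpr (hτ i).symm) le_rfl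
  have hcomm : Commute (G + K) (G - K) :=
    ((Commute.refl G).add_left hGK.symm).sub_right (hGK.add_left (Commute.refl K))
  rw [hGK.mul_self_sub_mul_self_eq, hcomm.isUnit_mul_iff] at hunit
  exact hunit.1

end InvertibleEndomorphisms

section DensityModes

variable {R : Type*} [Ring R]

/-- The operator `-(tⁿ⁺¹∂ + n l tⁿ)` by which the vector field `-tⁿ⁺¹∂` acts on tensor densities,
written in terms of `x = t` and `h = t∂`. -/
def densityMode (h x l : R) (n : ℕ) : R :=
  -(x ^ n * (h + n • l))

section NonnegativeModes

variable {h x l : R} (hhx : h * x = x * (h + 1)) (hlx : Commute l x)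

include hhx hlx

theorem add_smul_mul_pow (m n : ℕ) : (h + m • l) * x ^ n = x ^ n * (h + n • 1 + m • l) := by
  have hpow : h * x ^ n = x ^ n * (h + n • 1) := by
    induction n with
    | zero => simp
    | succ n ih =>
      rw [pow_succ, ← mul_assoc, ih, mul_assoc, add_mul, hhx, mul_assoc]
      congr 1
      simp only [mul_add, mul_one, smul_mul_assoc, one_mul, mul_smul_comm]
      module
  rw [add_mul, hpow, smul_mul_assoc, (hlx.pow_right n).eq, mul_add (x ^ n) _ (m • l),
    mul_smul_comm]

theorem densityMode_mul_densityMode (m n : ℕ) :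
    densityMode h x l m * densityMode h x l n =
      x ^ (m + n) * ((h + n • 1 + m • l) * (h + n • l)) := by
  rw [densityMode, densityMode, neg_mul_neg, mul_assoc, ← mul_assoc _ (x ^ n),
    add_smul_mul_pow hhx hlx, pow_add]
  simp only [mul_assoc]

theorem lie_densityMode (hlh : Commute l h) (m n : ℕ) :
    ⁅densityMode h x l m, densityMode h x l n⁆ = ((m : ℤ) - n) • densityMode h x l (m + n) := by
  rw [Ring.lie_def, densityMode_mul_densityMode hhx hlx, densityMode_mul_densityMode hhx hlx,
    add_comm n m, ← mul_sub, densityMode, ← mul_neg, ← mul_smul_comm]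
  congr 1
  simp only [mul_add, add_mul, smul_mul_assoc, mul_smul_comm, hlh.eq, one_mul]
  module

end NonnegativeModes

/-- The family of all the operators `densityMode h x l n`, `n ≥ 0`, with `y` in degree `-1`. The
value `y` in degrees below `-1` is junk. -/
def densityModes (h x l y : R) : ℤ → R
  | .ofNat n => densityMode h x l n
  | .negSucc _ => y

theorem commute_densityModes {k h x l y : R} (hh : Commute k h) (hx : Commute k x)
    (hl : Commute k l) (hy : Commute k y) (i : ℤ) : Commute k (densityModes h x l y i) :=
  match i with
  | .ofNat n => ((hx.pow_right n).mul_right (hh.add_right (hl.smul_right n))).neg_right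
  | .negSucc _ => hy

theorem densityModes_zero (h x l y : R) : densityModes h x l y 0 = -h := by
  change -(x ^ 0 * (h + 0 • l)) = -h
  rw [pow_zero, one_mul, zero_smul, add_zero]

theorem densityModes_one (h x l y : R) : densityModes h x l y 1 = -(x * (h + l)) := by
  change -(x ^ 1 * (h + 1 • l)) = -(x * (h + l))
  rw [pow_one, one_smul]

/-- The relations satisfied by `h = t∂`, `x = t`, `y = -∂ + l t⁻¹` and a central `l`; they make `y`
the mode of degree `-1` of the family `densityMode h x l`. -/
structure IsDensityData (h x l y : R) : Prop where
  h_mul_x : h * x = x * (h + 1)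
  h_mul_y : h * y = y * (h - 1)
  y_mul_x : y * x = l - (h + 1)
  x_mul_y : x * y = l - h
  commute_h : Commute l h
  commute_x : Commute l x
  commute_y : Commute l y

namespace IsDensityData

variable {h x l y : R} (hd : IsDensityData h x l y)

include hd

theorem mul_densityMode_succ (n : ℕ) :
    y * densityMode h x l (n + 1) =
      x ^ n * ((h + (n + 1) • 1 - l) * (h + (n + 1) • l)) := by
  have hpow : (h + 1 - l) * x ^ n = x ^ n * (h + (n + 1) • 1 - l) := by
    have h0 := add_smul_mul_pow hd.h_mul_x hd.commute_x 0 n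
    rw [zero_smul, add_zero, add_zero] at h0
    rw [sub_mul, add_mul, h0, (hd.commute_x.pow_right n).eq, one_mul, mul_sub, add_smul, one_smul,
      ← add_assoc, mul_add (x ^ n) _ 1, mul_one]
  rw [densityMode, mul_neg, pow_succ', ← mul_assoc y, ← mul_assoc y, hd.y_mul_x,
    ← mul_assoc (x ^ n), ← hpow, ← neg_mul, ← neg_mul, neg_sub]

theorem densityMode_succ_mul (n : ℕ) :
    densityMode h x l (n + 1) * y = x ^ n * ((h - l) * (h - 1 + (n + 1) • l)) := by
  have hy : (h + (n + 1) • l) * y = y * (h - 1 + (n + 1) • l) := by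
    rw [add_mul, hd.h_mul_y, smul_mul_assoc, hd.commute_y.eq, mul_add, mul_smul_comm]
  rw [densityMode, neg_mul, mul_assoc, hy, pow_succ, mul_assoc, ← mul_assoc x, hd.x_mul_y,
    ← mul_neg, ← neg_mul, neg_sub]

theorem lie_densityMode_succ (n : ℕ) :
    ⁅y, densityMode h x l (n + 1)⁆ = (-1 - ((n + 1 : ℕ) : ℤ)) • densityMode h x l n := by
  rw [Ring.lie_def, hd.mul_densityMode_succ, hd.densityMode_succ_mul, ← mul_sub, densityMode,
    ← mul_neg, ← mul_smul_comm]
  congr 1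
  simp only [mul_add, add_mul, sub_mul, mul_sub, smul_mul_assoc, mul_smul_comm, hd.commute_h.eq,
    one_mul, mul_one]
  module

theorem lie_densityModes_neg_one_natCast (n : ℕ) :
    ⁅densityModes h x l y (-1), densityModes h x l y n⁆ =
      (-1 - (n : ℤ)) • densityModes h x l y (-1 + n) := by
  cases n with
  | zero =>
    change ⁅y, densityModes h x l y 0⁆ = (-1 - (0 : ℤ)) • y
    rw [densityModes_zero, Ring.lie_def, mul_neg, neg_mul, hd.h_mul_y, mul_sub, mul_one]
    module
  | succ n =>
    rw [show -1 + ((n + 1 : ℕ) : ℤ) = n by omega]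
    exact hd.lie_densityMode_succ n

theorem lie_densityModes {i j : ℤ} (hi : -1 ≤ i) (hj : -1 ≤ j) :
    ⁅densityModes h x l y i, densityModes h x l y j⁆ = (i - j) • densityModes h x l y (i + j) := by
  have neg_one_or_natCast {a : ℤ} (ha : -1 ≤ a) : a = -1 ∨ ∃ n : ℕ, a = n :=
    ha.eq_or_lt.imp Eq.symm Int.eq_ofNat_of_zero_le
  rcases neg_one_or_natCast hi with rfl | ⟨m, rfl⟩ <;>
    rcases neg_one_or_natCast hj with rfl | ⟨n, rfl⟩
  · rw [Ring.lie_def, sub_self, sub_self, zero_smul]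
  · exact hd.lie_densityModes_neg_one_natCast n
  · rw [← neg_sub (-1 : ℤ), neg_smul, add_comm, ← hd.lie_densityModes_neg_one_natCast]
    exact (neg_sub _ _).symm
  · exact lie_densityMode hd.h_mul_x hd.commute_x hd.commute_h m n

end IsDensityData

end DensityModes

/-- `(E, F, H)` satisfies the relations of `sl(2)` and `K` is a square root of its Casimir element
`(H + 1)² + 4FE` that commutes with `E`, `F` and `H`. -/
structure IsCasimirSqrt (k : Type*) {A : Type*} [CommRing k] [Ring A] [Algebra k A]
    (E F H K : A) : Prop where
  lie_EF : ⁅E, F⁆ = H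
  lie_HE : ⁅H, E⁆ = (2 : k) • E
  lie_HF : ⁅H, F⁆ = (-2 : k) • F
  mul_self : K * K = (H + 1) ^ 2 + (4 : k) • (F * E)
  commute_E : Commute K E
  commute_F : Commute K F
  commute_H : Commute K H

/-- The analogue of `IsWittGtModule` for a family of elements of an arbitrary algebra over a field;
for `A = Module.End ℂ V` the two are definitionally equal. -/
def IsWittGtFamily (𝕜 : Type*) {A : Type*} [Field 𝕜] [Ring A] [Algebra 𝕜 A] (E F H : A)
    (ρ : ℤ → A) : Prop :=
  ρ (-1) = F ∧ ρ 0 = (-(1/2) : 𝕜) • H ∧ ρ 1 = -E ∧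
    ∀ i j : ℤ, -1 ≤ i → -1 ≤ j → ⁅ρ i, ρ j⁆ = ((i - j : ℤ) : 𝕜) • ρ (i + j)

namespace IsCasimirSqrt

section CommRing

variable {k A : Type*} [CommRing k] [Ring A] [Algebra k A] {E F H K : A}
  (hK : IsCasimirSqrt k E F H K)

include hK

theorem semiconjBy_E : SemiconjBy E (H + (2 : k) • 1) H := by
  rw [SemiconjBy, mul_add, mul_smul_comm, mul_one, ← hK.lie_HE, Ring.lie_def, add_sub_cancel]

theorem semiconjBy_F : SemiconjBy F (H - (2 : k) • 1) H := by
  rw [SemiconjBy, mul_sub, mul_smul_comm, mul_one, sub_eq_add_neg, ← neg_smul, ← hK.lie_HF,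
    Ring.lie_def, add_sub_cancel]

theorem four_smul_F_mul_E : (4 : k) • (F * E) = (K - (H + 1)) * (H + 1 + K) := by
  have hcomm : Commute K (H + 1) := hK.commute_H.add_right (.one_right K)
  rw [add_comm _ K, ← hcomm.mul_self_sub_mul_self_eq', hK.mul_self, sq, add_sub_cancel_left]

theorem four_smul_E_mul_F : (4 : k) • (E * F) = (K - (H - 1)) * (H - 1 + K) := by
  have hcomm : Commute K (H - 1) := hK.commute_H.sub_right (.one_right K)
  have hEF : E * F = F * E + H := by rw [← hK.lie_EF, Ring.lie_def, add_sub_cancel]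
  rw [add_comm _ K, ← hcomm.mul_self_sub_mul_self_eq', hK.mul_self, hEF]
  simp only [sq, mul_add, add_mul, mul_sub, sub_mul, mul_one, one_mul]
  module

theorem commute_H_inv {u : Aˣ} (hu : H + 1 + K = u) : Commute H ↑u⁻¹ := by
  refine Commute.units_inv_right ?_
  rw [← hu]
  exact ((Commute.refl H).add_right (.one_right H)).add_right hK.commute_H.symm

theorem commute_K_inv {u : Aˣ} (hu : H + 1 + K = u) : Commute K ↑u⁻¹ := by
  refine Commute.units_inv_right ?_
  rw [← hu]
  exact (hK.commute_H.add_right (.one_right K)).add_right (.refl K)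

theorem semiconjBy_F_inv {u v : Aˣ} (hu : H + 1 + K = u) (hv : H - 1 + K = v) :
    SemiconjBy F ↑v⁻¹ ↑u⁻¹ := by
  have hshift : H - 1 + K = H - (2 : k) • 1 + 1 + K := by module
  refine SemiconjBy.units_inv_right ?_
  rw [← hu, ← hv, hshift]
  exact (hK.semiconjBy_F.add_right (.one_right F)).add_right hK.commute_F.symm

theorem semiconjBy_E_mul_inv {u : Aˣ} (hu : H + 1 + K = u) :
    SemiconjBy (E * ↑u⁻¹) (H + (2 : k) • 1) H := by
  have hcomm : Commute ↑u⁻¹ (H + (2 : k) • 1) :=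
    (hK.commute_H_inv hu).symm.add_right ((Commute.one_right _).smul_right _)
  exact hK.semiconjBy_E.mul_left hcomm

theorem four_smul_F_mul_E_mul_inv {u : Aˣ} (hu : H + 1 + K = u) :
    (4 : k) • (F * (E * ↑u⁻¹)) = K - (H + 1) := by
  rw [← mul_assoc, ← smul_mul_assoc, hK.four_smul_F_mul_E, hu, Units.mul_inv_cancel_right]

theorem four_smul_E_mul_inv_mul_F {u v : Aˣ} (hu : H + 1 + K = u) (hv : H - 1 + K = v) :
    (4 : k) • (E * ↑u⁻¹ * F) = K - (H - 1) := by
  rw [mul_assoc, ← (hK.semiconjBy_F_inv hu hv).eq, ← mul_assoc, ← smul_mul_assoc,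
    hK.four_smul_E_mul_F, hv, Units.mul_inv_cancel_right]

end CommRing

section Field

variable {𝕜 A : Type*} [Field 𝕜] [NeZero (2 : 𝕜)] [Ring A] [Algebra 𝕜 A] {E F H K : A}
  (hK : IsCasimirSqrt 𝕜 E F H K)

include hK

theorem isDensityData {u v : Aˣ} (hu : H + 1 + K = u) (hv : H - 1 + K = v) :
    IsDensityData ((1 / 2 : 𝕜) • H) ((2 : 𝕜) • (E * ↑u⁻¹)) ((1 / 2 : 𝕜) • (1 + K)) F := by
  have half_two (a : A) : (1 / 2 : 𝕜) • (2 : 𝕜) • a = a := by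
    rw [smul_smul, one_div_mul_cancel two_ne_zero, one_smul]
  have two_eq_half_four (a : A) : (2 : 𝕜) • a = (1 / 2 : 𝕜) • (4 : 𝕜) • a := by
    rw [← half_two ((2 : 𝕜) • a), smul_smul 2 2, show (2 * 2 : 𝕜) = 4 by norm_num]
  exact {
    h_mul_x := by
      rw [← half_two 1, ← smul_add, smul_mul_smul_comm, smul_mul_smul_comm, mul_comm,
        (hK.semiconjBy_E_mul_inv hu).eq]
    h_mul_y := by
      rw [← half_two 1, ← smul_sub, smul_mul_assoc, mul_smul_comm, hK.semiconjBy_F.eq]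
    y_mul_x := by
      rw [mul_smul_comm, two_eq_half_four, hK.four_smul_F_mul_E_mul_inv hu,
        show K - (H + 1) = 1 + K - (H + (2 : 𝕜) • 1) by module, smul_sub, smul_add _ H, half_two]
    x_mul_y := by
      rw [smul_mul_assoc, two_eq_half_four, hK.four_smul_E_mul_inv_mul_F hu hv, ← smul_sub,
        show K - (H - 1) = 1 + K - H by abel]
    commute_h := (((Commute.one_left H).add_left hK.commute_H).smul_left _).smul_right _
    commute_x := (((Commute.one_left _).add_left
      (hK.commute_E.mul_right (hK.commute_K_inv hu))).smul_left _).smul_right _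
    commute_y := ((Commute.one_left F).add_left hK.commute_F).smul_left _ }

theorem exists_isWittGtFamily (hP : IsUnit (H + 1 + K)) (hQ : IsUnit (H - 1 + K)) :
    ∃ ρ : ℤ → A, IsWittGtFamily 𝕜 E F H ρ ∧ ∀ i, Commute K (ρ i) := by
  obtain ⟨u, hu⟩ := hP
  obtain ⟨v, hv⟩ := hQ
  have hd := hK.isDensityData hu.symm hv.symm
  have hKx := (hK.commute_E.mul_right (hK.commute_K_inv hu.symm)).smul_right (2 : 𝕜)
  have hKl := ((Commute.one_right K).add_right (.refl K)).smul_right (1 / 2 : 𝕜)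
  refine ⟨densityModes ((1 / 2 : 𝕜) • H) ((2 : 𝕜) • (E * ↑u⁻¹)) ((1 / 2 : 𝕜) • (1 + K)) F,
    ⟨rfl, ?_, ?_, fun i j hi hj => ?_⟩,
    commute_densityModes (hK.commute_H.smul_right _) hKx hKl hK.commute_F⟩
  · rw [densityModes_zero, neg_smul]
  · rw [densityModes_one, ← smul_add, ← add_assoc, ← hu, smul_mul_smul_comm,
      mul_one_div_cancel two_ne_zero, one_smul, Units.inv_mul_cancel_right]
  · rw [Int.cast_smul_eq_zsmul, hd.lie_densityModes hi hj]

end Field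

end IsCasimirSqrt

theorem weight_module_wittGt_extension_general {𝕜 V ι : Type*} [Field 𝕜] [NeZero (2 : 𝕜)]
    [AddCommGroup V] [Module 𝕜 V] {E F H K : Module.End 𝕜 V} (hK : IsCasimirSqrt 𝕜 E F H K)
    {μ : ι → 𝕜} {τ : 𝕜} (hadd : ∀ i, τ ≠ (μ i + 1) ^ 2) (hsub : ∀ i, τ ≠ (μ i - 1) ^ 2)
    (hH : ⨆ i, H.maxGenEigenspace (μ i) = ⊤)
    (hc : ((H + 1) ^ 2 + (4 : 𝕜) • (F * E)).maxGenEigenspace τ = ⊤) :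
    ∃ ρ : ℤ → Module.End 𝕜 V, IsWittGtFamily 𝕜 E F H ρ ∧ ∀ i, Commute K (ρ i) := by
  have hunit (s : 𝕜) (hs : ∀ i, τ ≠ (μ i + s) ^ 2) : IsUnit (H + s • 1 + K) := by
    refine isUnit_add_of_iSup_maxGenEigenspace_eq_top ?_ (hK.mul_self ▸ hc) (a := (μ · + s)) ?_ hs
    · exact hK.commute_H.symm.add_left ((Commute.one_left K).smul_left s)
    · simpa only [maxGenEigenspace_add_smul_one] using hH
  refine hK.exists_isWittGtFamily ?_ ?_
  · simpa only [one_smul] using hunit 1 hadd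
  · simpa only [neg_smul, one_smul, ← sub_eq_add_neg] using
      hunit (-1) (by simpa only [← sub_eq_add_neg] using hsub)

/-- every object of the category `M̄^{ξ,τ}` (with `τ ≠ (μ+1)²` for all
`μ ∈ ξ`) possessing a square root of the Casimir operator commuting with the
sl(2)-action admits a compatible Witt_>-module structure for which the Casimir
operator is central. -/
theorem weight_module_wittGt_extension
    (V : Type*) [AddCommGroup V] [Module ℂ V] (μ₀ τ : ℂ)
    (hτ : ∀ n : ℤ, τ ≠ (μ₀ + 2 * n + 1) ^ 2)
    (E F H : Module.End ℂ V)
    (hEF : ⁅E, F⁆ = H) (hHE : ⁅H, E⁆ = (2 : ℂ) • E) (hHF : ⁅H, F⁆ = (-2 : ℂ) • F)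
    (hint : DirectSum.IsInternal fun n : ℤ =>
      LinearMap.ker (H - (μ₀ + 2 * n : ℂ) • (1 : Module.End ℂ V)))
    (hfd : ∀ n : ℤ, FiniteDimensional ℂ
      (LinearMap.ker (H - (μ₀ + 2 * n : ℂ) • (1 : Module.End ℂ V)) : Submodule ℂ V))
    (hnil : ∀ n : ℤ, ∀ x ∈ LinearMap.ker (H - (μ₀ + 2 * n : ℂ) • (1 : Module.End ℂ V)),
      ∃ m : ℕ, ((((H + 1) ^ 2 + (4 : ℂ) • (F * E) - τ • (1 : Module.End ℂ V)) ^ m : Module.End ℂ V)) x = 0)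
    (K : Module.End ℂ V)
    (hK2 : K * K = (H + 1) ^ 2 + (4 : ℂ) • (F * E))
    (hKE : ⁅K, E⁆ = 0) (hKF : ⁅K, F⁆ = 0) (hKH : ⁅K, H⁆ = 0) :
    ∃ ρ : ℤ → Module.End ℂ V, IsWittGtModule E F H ρ ∧
      ∀ i : ℤ, -1 ≤ i → ⁅(H + 1) ^ 2 + (4 : ℂ) • (F * E), ρ i⁆ = 0 := by
  simp_rw [← Module.End.eigenspace_def] at hint hnil
  have hH := hint.submodule_iSup_eq_top
  have hK : IsCasimirSqrt ℂ E F H K := ⟨hEF, hHE, hHF, hK2, commute_iff_lie_eq.mpr hKE,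
    commute_iff_lie_eq.mpr hKF, commute_iff_lie_eq.mpr hKH⟩
  obtain ⟨ρ, hρ, hcomm⟩ := weight_module_wittGt_extension_general hK hτ
    (fun n => by convert hτ (n - 1) using 2; push_cast; ring)
    (top_le_iff.mp (hH ▸ iSup_mono fun n => H.genEigenspace_le_maximal _ 1))
    (top_le_iff.mp (hH ▸ iSup_le fun n x hx =>
      (Module.End.mem_maxGenEigenspace _ _ _).mpr (hnil n x hx)))
  exact ⟨ρ, hρ, fun i _ => hK2 ▸ ((hcomm i).mul_left (hcomm i)).lie_eq⟩
end

section
/- Fix μ₀, τ ∈ ℂ with τ ≠ 0 and τ ≠ (μ+1)² for all μ ∈ ξ = μ₀+2ℤ. Let V be a complex vector space with a representation (E,F,H) of sl(2,ℂ) such that V is the internal direct sum of its weight spaces V_μ = ker(H − μ·id) for μ ∈ ξ, each V_μ is finite dimensional, and (c − τ) is nilpotent on each V_μ, where c = (H + id)² + 4F∘E. Suppose T ∈ End(V) satisfies the four relations [F,T] = 3E, [H,T] = 4T, [c,T] = 0, and [T,[E,T]] = −(1/6)·[E,[E,[E,T]]]. Then there exists a Witt_>-module structure (ρ_i)_{i≥−1}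 on V compatible with (E,F,H) with ρ₂ = T. -/
/-!
A sequence with `⁅ρ₁, ρₙ⁆ = (1 - n) ρₙ₊₁` is determined by `ρ₂ = T`, and by the Jacobi identity it
satisfies all Witt relations as soon as `⁅ρ₂, ρ₃⁆ = -ρ₅` and `⁅ρ₂, ρ₅⁆ = -3 ρ₇`. The first of these
is the quadratic relation on `T`. For the second, note that a vector of weight `μ` killed by `F` has
Casimir eigenvalue `(μ - 1)²`, so the condition on `τ` makes `F` injective. Multiplication by a
power of `4 F` turns `(ad E)ⁿ T` into a polynomial in the commuting elements `H + 1`, the Casimir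
element and the part of `(4 F)² T` that commutes with `F`. In terms of these polynomials the
relation in degree 7 is a multiple of the one in degree 5, and the power of `F` can be cancelled.
-/

section WittDefect

variable {L : Type*} [LieRing L]

/-- The failure of the Witt relation between the `i`-th and `j`-th terms of the sequence `ρ`. -/
def wittDefect (ρ : ℤ → L) (i j : ℤ) : L := ⁅ρ i, ρ j⁆ - (i - j) • ρ (i + j)

variable {ρ : ℤ → L} {i j k n N : ℤ}

lemma wittDefect_eq_zero_iff : wittDefect ρ i j = 0 ↔ ⁅ρ i, ρ j⁆ = (i - j) • ρ (i + j) :=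
  sub_eq_zero

lemma wittDefect_self : wittDefect ρ i i = 0 := by simp [wittDefect]

lemma wittDefect_skew : -wittDefect ρ j i = wittDefect ρ i j := by
  rw [wittDefect, wittDefect, ← lie_skew (ρ i), add_comm j i]
  module

lemma wittDefect_swap (h : wittDefect ρ i j = 0) : wittDefect ρ j i = 0 := by
  rw [← wittDefect_skew, h, neg_zero]

lemma wittDefect_jacobi (hij : wittDefect ρ i j = 0) (hik : wittDefect ρ i k = 0)
    (hjk : wittDefect ρ j k = 0) :
    (j - k) • wittDefect ρ i (j + k) =
      (i - j) • wittDefect ρ (i + j) k + (i - k) • wittDefect ρ j (i + k) := by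
  rw [wittDefect_eq_zero_iff] at hij hik hjk
  have jacobi := leibniz_lie (ρ i) (ρ j) (ρ k)
  rw [hij, hik, hjk, lie_zsmul, zsmul_lie, lie_zsmul] at jacobi
  simp only [wittDefect, smul_sub, jacobi, add_assoc, add_left_comm j i k]
  module

variable [IsAddTorsionFree L]

lemma wittDefect_eq_zero_of_add_le (h1 : ∀ n, 1 ≤ n → wittDefect ρ 1 n = 0)
    (h2 : ∀ n, 1 ≤ n → n + 2 ≤ N → wittDefect ρ 2 n = 0)
    (hi : 1 ≤ i) (hj : 1 ≤ j) (hij : i + j ≤ N) : wittDefect ρ i j = 0 := by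
  induction i, hi using Int.leInduction generalizing j with
  | base => exact h1 j hj
  | succ i hi ih =>
    obtain rfl | hi' := hi.eq_or_lt
    · exact h2 j hj (by omega)
    · have jacobi := wittDefect_jacobi (h1 i hi) (h1 j hj) (ih hj (by omega))
      rw [h1 (i + j) (by omega), ih (j := 1 + j) (by omega) (by omega), smul_zero, smul_zero,
        add_zero, eq_comm, IsAddTorsionFree.zsmul_eq_zero_iff_right (by omega), add_comm] at jacobi
      exact jacobi

-- Four Jacobi identities in total degree `n + 2` give `n (n + 2) (n - 5) • wittDefect ρ 2 n = 0`,
-- and the factor `n - 5` is why the relation in degree 7 needs a separate argument.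
lemma wittDefect_two_eq_zero_of_lower (h1 : ∀ n, 1 ≤ n → wittDefect ρ 1 n = 0)
    (lower : ∀ i j, 1 ≤ i → 1 ≤ j → i + j ≤ n + 1 → wittDefect ρ i j = 0)
    (hn : 4 ≤ n) (hn5 : n ≠ 5) : wittDefect ρ 2 n = 0 := by
  have jacobi (i j k : ℤ) (hi : 1 ≤ i) (hj : 1 ≤ j) (hk : 1 ≤ k) (h : i + j + k = n + 2) :=
    wittDefect_jacobi (lower i j hi hj (by omega)) (lower i k hi hk (by omega))
      (lower j k hj hk (by omega))
  have J12 := jacobi 1 2 (n - 1) (by omega) (by omega) (by omega) (by ring)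
  have J13 := jacobi 1 3 (n - 2) (by omega) (by omega) (by omega) (by ring)
  have J14 := jacobi 1 4 (n - 3) (by omega) (by omega) (by omega) (by ring)
  have J23 := jacobi 2 3 (n - 3) (by omega) (by omega) (by omega) (by ring)
  have e1 : 1 + (n - 1) = n := by ring
  have e2 : 1 + (n - 2) = n - 1 := by ring
  have e3 : 1 + (n - 3) = n - 2 := by ring
  have e4 : 2 + (n - 3) = n - 1 := by ring
  have e5 : 3 + (n - 3) = n := by ring
  rw [h1 _ (by omega), smul_zero] at J12 J13 J14
  norm_num only [e1, e2, e3, e4, e5] at J12 J13 J14 J23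
  have key : (n * (n + 2) * (n - 5)) • wittDefect ρ 2 n = 0 := by
    linear_combination (norm := skip) (-6 : ℤ) • J23 + (2 : ℤ) • J14 - (n - 4) • J13 -
      (6 * (5 - n) + (3 - n) * (n - 4)) • J12
    module
  have : n * (n + 2) * (n - 5) ≠ 0 :=
    mul_ne_zero (mul_ne_zero (by omega) (by omega)) (by omega)
  exact (IsAddTorsionFree.zsmul_eq_zero_iff_right this).mp key

lemma wittDefect_two_eq_zero (h1 : ∀ n, 1 ≤ n → wittDefect ρ 1 n = 0)
    (h23 : wittDefect ρ 2 3 = 0) (h25 : wittDefect ρ 2 5 = 0) (hn : 1 ≤ n) :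
    wittDefect ρ 2 n = 0 := by
  suffices ∀ N n : ℤ, 1 ≤ N → 1 ≤ n → n ≤ N → wittDefect ρ 2 n = 0 from this n n hn hn le_rfl
  intro N n hN
  induction N, hN using Int.leInduction generalizing n with
  | base =>
    intro hn hnN
    obtain rfl : n = 1 := by omega
    exact wittDefect_swap (h1 2 (by norm_num))
  | succ N _ ih =>
    intro hn hnN
    have lower (i j : ℤ) (hi : 1 ≤ i) (hj : 1 ≤ j) (hij : i + j ≤ N + 2) : wittDefect ρ i j = 0 :=
      wittDefect_eq_zero_of_add_le h1 (fun m hm hmN => ih m hm (by omega)) hi hj hij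
    obtain rfl | rfl | rfl | rfl | ⟨hn4, hn5⟩ :
        n = 1 ∨ n = 2 ∨ n = 3 ∨ n = 5 ∨ 4 ≤ n ∧ n ≠ 5 := by omega
    · exact wittDefect_swap (h1 2 (by norm_num))
    · exact wittDefect_self
    · exact h23
    · exact h25
    · exact wittDefect_two_eq_zero_of_lower h1 (fun i j hi hj hij => lower i j hi hj (by omega))
        hn4 hn5

lemma wittDefect_eq_zero_of_succ (h1 : ∀ n, -1 ≤ n → wittDefect ρ 1 n = 0)
    (hi : -1 ≤ i) (hi2 : wittDefect ρ i 2 = 0)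
    (hsucc : ∀ n, 1 ≤ n → wittDefect ρ (i + 1) n = 0) (hn : 1 ≤ n) : wittDefect ρ i n = 0 := by
  have hi1 : wittDefect ρ i 1 = 0 := wittDefect_swap (h1 i hi)
  induction n, hn using Int.leInduction with
  | base => exact hi1
  | succ n hn ih =>
    obtain rfl | hn' := hn.eq_or_lt
    · exact hi2
    · have jacobi := wittDefect_jacobi hi1 ih (h1 n (by omega))
      rw [hsucc n hn, h1 (i + n) (by omega), smul_zero, smul_zero, add_zero,
        IsAddTorsionFree.zsmul_eq_zero_iff_right (by omega), add_comm] at jacobi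
      exact jacobi

theorem wittDefect_eq_zero (h1 : ∀ n, -1 ≤ n → wittDefect ρ 1 n = 0)
    (hneg0 : wittDefect ρ (-1) 0 = 0) (hneg2 : wittDefect ρ (-1) 2 = 0)
    (h02 : wittDefect ρ 0 2 = 0) (h23 : wittDefect ρ 2 3 = 0) (h25 : wittDefect ρ 2 5 = 0)
    (hi : -1 ≤ i) (hj : -1 ≤ j) : wittDefect ρ i j = 0 := by
  have h1_pos (n : ℤ) (hn : 1 ≤ n) : wittDefect ρ 1 n = 0 := h1 n (by omega)
  have pos (i j : ℤ) (hi : 1 ≤ i) (hj : 1 ≤ j) : wittDefect ρ i j = 0 :=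
    wittDefect_eq_zero_of_add_le h1_pos
      (fun n hn _ => wittDefect_two_eq_zero h1_pos h23 h25 hn) hi hj le_rfl
  have zero_pos (n : ℤ) (hn : 1 ≤ n) : wittDefect ρ 0 n = 0 :=
    wittDefect_eq_zero_of_succ h1 (by norm_num) h02 (pos 1 · le_rfl) hn
  have neg_pos (n : ℤ) (hn : 1 ≤ n) : wittDefect ρ (-1) n = 0 :=
    wittDefect_eq_zero_of_succ h1 le_rfl hneg2 zero_pos hn
  obtain rfl | rfl | hi := (by omega : i = -1 ∨ i = 0 ∨ 1 ≤ i) <;>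
    obtain rfl | rfl | hj := (by omega : j = -1 ∨ j = 0 ∨ 1 ≤ j)
  · exact wittDefect_self
  · exact hneg0
  · exact neg_pos j hj
  · exact wittDefect_swap hneg0
  · exact wittDefect_self
  · exact zero_pos j hj
  · exact wittDefect_swap (neg_pos i hi)
  · exact wittDefect_swap (zero_pos i hi)
  · exact pos i j hi hj

end WittDefect

/-- The Witt relations among `ρ₋₁ = F`, `ρ₀ = -H/2`, `ρ₁ = -E` and `ρ₂ = T` that involve no further
term `ρᵢ`. -/
structure IsWittQuadruple {L : Type*} [AddCommGroup L] [Bracket L L] (E F H T : L) : Prop where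
  lie_E_F : ⁅E, F⁆ = H
  lie_H_E : ⁅H, E⁆ = 2 • E
  lie_H_F : ⁅H, F⁆ = -(2 • F)
  lie_F_T : ⁅F, T⁆ = 3 • E
  lie_H_T : ⁅H, T⁆ = 4 • T

section WittSequence

variable (K : Type*) {L : Type*} [Field K] [LieRing L] [LieAlgebra K L]

open Nat in
/-- The only sequence with `ρ₋₁ = F`, `ρ₀ = -H/2`, `ρ₁ = -E` and `ρ₂ = T` that can satisfy the Witt
relations `⁅ρ₁, ρₙ⁆ = (1 - n) ρₙ₊₁`; the terms of index below `-1` are junk. -/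
def wittSequence (E F H T : L) : ℤ → L
  | Int.negSucc _ => F
  | 0 => -(1 / 2 : K) • H
  | 1 => -E
  | (n + 2 : ℕ) => (n ! : K)⁻¹ • (⁅E, ·⁆)^[n] T

variable {K} [CharZero K] {E F H T : L}

lemma wittDefect_wittSequence_one_natCast (n : ℕ) :
    wittDefect (wittSequence K E F H T) 1 (n + 2 : ℕ) = 0 := by
  have hn : ((n + 1 : ℕ) : K) ≠ 0 := Nat.cast_ne_zero.mpr n.succ_ne_zero
  have index : (1 : ℤ) + (n + 2 : ℕ) = (n + 1 + 2 : ℕ) := by push_cast; ring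
  have coeff : (1 : ℤ) - (n + 2 : ℕ) = -(n + 1 : ℕ) := by push_cast; ring
  rw [wittDefect_eq_zero_iff, index, coeff, neg_smul, natCast_zsmul]
  simp only [wittSequence, neg_lie, lie_smul, smul_neg, Function.iterate_succ_apply',
    Nat.factorial_succ, ← Nat.cast_smul_eq_nsmul K, smul_smul, Nat.cast_mul, mul_inv,
    mul_inv_cancel_left₀ hn]

lemma wittDefect_wittSequence_one (hT : IsWittQuadruple E F H T) {n : ℤ} (hn : -1 ≤ n) :
    wittDefect (wittSequence K E F H T) 1 n = 0 := by
  obtain rfl | rfl | rfl | ⟨m, rfl⟩ : n = -1 ∨ n = 0 ∨ n = 1 ∨ ∃ m : ℕ, n = (m + 2 : ℕ) := by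
    obtain h | h := lt_or_ge n 2
    · omega
    · exact .inr <| .inr <| .inr ⟨(n - 2).toNat, by omega⟩
  · change ⁅-E, F⁆ - (1 - -1 : ℤ) • (-(1 / 2 : K) • H) = 0
    rw [neg_lie, hT.lie_E_F]
    module
  · change ⁅-E, -(1 / 2 : K) • H⁆ - (1 - 0 : ℤ) • -E = 0
    rw [neg_lie, lie_smul, ← lie_skew, hT.lie_H_E]
    module
  · exact wittDefect_self
  · exact wittDefect_wittSequence_one_natCast m

theorem wittDefect_wittSequence (hT : IsWittQuadruple E F H T)
    (h5 : 6 • ⁅T, ⁅E, T⁆⁆ + (⁅E, ·⁆)^[3] T = 0)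
    (h7 : 20 • ⁅T, (⁅E, ·⁆)^[3] T⁆ + 3 • (⁅E, ·⁆)^[5] T = 0)
    {i j : ℤ} (hi : -1 ≤ i) (hj : -1 ≤ j) : wittDefect (wittSequence K E F H T) i j = 0 := by
  have : IsAddTorsionFree L := .of_isTorsionFree K L
  have rho_two : wittSequence K E F H T 2 = T := by simp [wittSequence]
  have rho_three : wittSequence K E F H T 3 = ⁅E, T⁆ := by simp [wittSequence]
  have rho_five : wittSequence K E F H T 5 = (1 / 6 : K) • (⁅E, ·⁆)^[3] T := by
    simp [wittSequence, Nat.factorial]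
  have rho_seven : wittSequence K E F H T 7 = (1 / 120 : K) • (⁅E, ·⁆)^[5] T := by
    simp [wittSequence, Nat.factorial]
  refine wittDefect_eq_zero (fun n => wittDefect_wittSequence_one hT) ?_ ?_ ?_ ?_ ?_ hi hj
  · change ⁅F, -(1 / 2 : K) • H⁆ - (-1 - 0 : ℤ) • F = 0
    rw [lie_smul, ← lie_skew, hT.lie_H_F]
    module
  · change ⁅F, wittSequence K E F H T 2⁆ - (-1 - 2 : ℤ) • -E = 0
    rw [rho_two, hT.lie_F_T]
    module
  · change ⁅-(1 / 2 : K) • H, wittSequence K E F H T 2⁆ - (0 - 2 : ℤ) • wittSequence K E F H T 2 = 0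
    rw [rho_two, smul_lie, hT.lie_H_T]
    module
  · change ⁅wittSequence K E F H T 2, wittSequence K E F H T 3⁆ -
      (2 - 3 : ℤ) • wittSequence K E F H T 5 = 0
    rw [rho_two, rho_three, rho_five]
    linear_combination (norm := module) (1 / 6 : K) • h5
  · change ⁅wittSequence K E F H T 2, wittSequence K E F H T 5⁆ -
      (2 - 5 : ℤ) • wittSequence K E F H T 7 = 0
    rw [rho_two, rho_five, rho_seven, lie_smul]
    linear_combination (norm := module) (1 / 120 : K) • h7

end WittSequence

section AdSymbol

/-- The polynomial in `h` and `c` by which `(4 F)² T` differs from an element commuting with `F`;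
here and below `h` stands for `H + 1` and `c` for the Casimir element. -/
def wittCubic {R : Type*} [Ring R] (c h : R) : R := 2 * (h + 1) * (h ^ 2 + 2 * h - 3 * c)

/-- The polynomial in `h`, `c` and `p` that equals `(4 F)ⁿ⁺² (ad E)ⁿ T`, where `p` stands for
`symbolConstant E F H T`. -/
def adSymbol {R : Type*} [Ring R] (c p : R) : ℕ → R → R
  | 0, h => p - wittCubic c h
  | n + 1, h =>
    (c - (h + 2 * (n + 2 : ℕ)) ^ 2) * adSymbol c p n h - adSymbol c p n (h + 2) * (c - h ^ 2)

lemma map_adSymbol {R S : Type*} [Ring R] [Ring S] (φ : R →+* S) (c p h : R) (n : ℕ) :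
    φ (adSymbol c p n h) = adSymbol (φ c) (φ p) n (φ h) := by
  induction n generalizing h with
  | zero => simp [adSymbol, wittCubic, map_ofNat φ]
  | succ n ih => simp [adSymbol, ih, map_ofNat φ]

-- The last factor on the right is `192 * (p ^ 2 - 16 * c * (1 - c) ^ 2)`.
lemma adSymbol_degree_seven {R : Type*} [CommRing R] (c p h : R) :
    20 * (adSymbol c p 0 (h + 10) * adSymbol c p 3 h -
        adSymbol c p 3 (h + 4) * adSymbol c p 0 h) + 3 * adSymbol c p 5 h =
      240 * (5 * (h + 6) ^ 2 + c - 4) *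
        (6 * (adSymbol c p 0 (h + 6) * adSymbol c p 1 h -
          adSymbol c p 1 (h + 4) * adSymbol c p 0 h) + adSymbol c p 3 h) := by
  simp only [adSymbol, wittCubic]
  push_cast
  ring

variable {A : Type*} [Ring A] {c p h x y z : A}

open scoped IsMulCommutative in
lemma adSymbol_degree_seven_of_commute (hc : Commute h c) (hp : Commute h p) (cp : Commute c p) :
    20 * (adSymbol c p 0 (h + 10) * adSymbol c p 3 h -
        adSymbol c p 3 (h + 4) * adSymbol c p 0 h) + 3 * adSymbol c p 5 h =
      240 * (5 * (h + 6) ^ 2 + c - 4) *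
        (6 * (adSymbol c p 0 (h + 6) * adSymbol c p 1 h -
          adSymbol c p 1 (h + 4) * adSymbol c p 0 h) + adSymbol c p 3 h) := by
  let S := Subring.closure {h, c, p}
  have : IsMulCommutative S := Subring.isMulCommutative_closure <| by
    rintro x (rfl | rfl | rfl) y (rfl | rfl | rfl)
    exacts [rfl, hc, hp, hc.symm, rfl, cp, hp.symm, cp.symm, rfl]
  let h' : S := ⟨h, Subring.subset_closure (by simp)⟩
  let c' : S := ⟨c, Subring.subset_closure (by simp)⟩
  let p' : S := ⟨p, Subring.subset_closure (by simp)⟩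
  have key := congrArg S.subtype (adSymbol_degree_seven c' p' h')
  simp only [map_add, map_sub, map_mul, map_pow, map_ofNat, map_adSymbol] at key
  exact key

lemma semiconjBy_four_mul (hx : SemiconjBy x y z) : SemiconjBy (4 * x) y z := by
  have four : SemiconjBy 4 z z := Commute.ofNat_left 4 z
  exact four.mul_left hx

lemma semiconjBy_wittCubic (hx : SemiconjBy x y z) (hc : Commute x c) :
    SemiconjBy x (wittCubic c y) (wittCubic c z) :=
  (SemiconjBy.mul_right (Commute.ofNat_right x 2) (hx.add_right (.one_right x))).mul_right <|
    ((hx.pow_right 2).add_right (SemiconjBy.mul_right (Commute.ofNat_right x 2) hx)).sub_right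
      ((Commute.ofNat_right x 3).mul_right hc)

lemma semiconjBy_adSymbol (hx : SemiconjBy x y z) (hc : Commute x c) (hp : Commute x p) (n : ℕ) :
    SemiconjBy x (adSymbol c p n y) (adSymbol c p n z) := by
  induction n generalizing y z with
  | zero =>
    have hcubic := semiconjBy_wittCubic hx hc
    exact SemiconjBy.sub_right hp hcubic
  | succ n ih =>
    have shift : SemiconjBy x (y + 2 * (n + 2 : ℕ)) (z + 2 * (n + 2 : ℕ)) :=
      hx.add_right <| (Commute.ofNat_right x 2).mul_right (Nat.commute_cast x (n + 2))
    have hright := ih (hx.add_right (Commute.ofNat_right x 2))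
    exact ((SemiconjBy.sub_right hc (shift.pow_right 2)).mul_right (ih hx)).sub_right
      (hright.mul_right (SemiconjBy.sub_right hc (hx.pow_right 2)))

lemma pow_mul_lie {D a b a' b' : A} {i j : ℕ} (hx : D ^ i * x = a) (hy : D ^ j * y = b)
    (ha : SemiconjBy (D ^ j) a a') (hb : SemiconjBy (D ^ i) b b') :
    D ^ (i + j) * ⁅x, y⁆ = a' * b - b' * a := by
  calc D ^ (i + j) * ⁅x, y⁆ = D ^ j * (D ^ i * x) * y - D ^ i * (D ^ j * y) * x := by
        rw [Ring.lie_def, mul_sub, ← mul_assoc, ← mul_assoc, ← mul_assoc (D ^ j), ← pow_add,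
          ← mul_assoc (D ^ i), ← pow_add, add_comm j i]
    _ = a' * b - b' * a := by rw [hx, hy, ha.eq, hb.eq, mul_assoc, mul_assoc, hx, hy]

end AdSymbol

section DegreeSeven

variable {A : Type*} [Ring A]

/-- The Casimir element of an `sl₂`-triple, normalised so that it is `(H + 1)²` on vectors killed
by `E`. -/
def casimir (E F H : A) : A := (H + 1) ^ 2 + 4 * (F * E)

/-- The part of `(4 F)² T` that commutes with `F`, `H` and the Casimir element. -/
def symbolConstant (E F H T : A) : A := (4 * F) ^ 2 * T + wittCubic (casimir E F H) (H + 1)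

namespace IsWittQuadruple

variable {E F H T : A} (hT : IsWittQuadruple E F H T)
include hT

lemma semiconjBy_F : SemiconjBy F (H + 1) (H + 1 + 2) := by
  have hHF := hT.lie_H_F
  rw [Ring.lie_def] at hHF
  rw [SemiconjBy]
  linear_combination (norm := noncomm_ring) -hHF

lemma semiconjBy_pow (k : ℕ) : SemiconjBy ((4 * F) ^ k) (H + 1) (H + 1 + 2 * k) := by
  induction k with
  | zero => simp
  | succ k ih =>
    have step : SemiconjBy (4 * F) (H + 1 + 2 * k) (H + 1 + 2 + 2 * k) :=
      (semiconjBy_four_mul hT.semiconjBy_F).add_right <|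
        (Commute.ofNat_right _ 2).mul_right (Nat.commute_cast _ k)
    have index : H + 1 + 2 + 2 * k = H + 1 + 2 * (k + 1 : ℕ) := by
      rw [add_assoc, Nat.cast_succ, mul_add_one, add_comm (2 : A)]
    rw [pow_succ', ← index]
    exact step.mul_left ih

lemma semiconjBy_E : SemiconjBy E (H + 1 + 2) (H + 1) := by
  have hHE := hT.lie_H_E
  rw [Ring.lie_def] at hHE
  rw [SemiconjBy]
  linear_combination (norm := noncomm_ring) -hHE

lemma semiconjBy_T : SemiconjBy T (H + 1 + 4) (H + 1) := by
  have hHT := hT.lie_H_T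
  rw [Ring.lie_def] at hHT
  rw [SemiconjBy]
  linear_combination (norm := noncomm_ring) -hHT

lemma commute_F_casimir : Commute F (casimir E F H) := by
  have hEF := hT.lie_E_F
  rw [Ring.lie_def] at hEF
  have hF := (hT.semiconjBy_F.pow_right 2).eq
  rw [Commute, SemiconjBy, casimir]
  linear_combination (norm := noncomm_ring) hF - 4 * hT.semiconjBy_F.eq - 4 * F * hEF

lemma commute_H_add_one_casimir : Commute (H + 1) (casimir E F H) := by
  have hFE : Commute (F * E) (H + 1 + 2) := hT.semiconjBy_F.mul_left hT.semiconjBy_E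
  have hFE' : Commute (F * E) (H + 1) := by simpa using hFE.sub_right (Commute.ofNat_right _ 2)
  exact ((Commute.refl _).pow_right 2).add_right ((Commute.ofNat_right _ 4).mul_right hFE'.symm)

lemma commute_F_symbolConstant : Commute F (symbolConstant E F H T) := by
  have hFT := hT.lie_F_T
  rw [Ring.lie_def] at hFT
  have hcubic := (semiconjBy_wittCubic hT.semiconjBy_F hT.commute_F_casimir).eq
  have hE : 4 * (F * E) = casimir E F H - (H + 1) ^ 2 := by rw [casimir]; abel
  simp only [wittCubic] at hcubic
  rw [Commute, SemiconjBy, symbolConstant, wittCubic]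
  linear_combination (norm := noncomm_ring) hcubic + 16 * F ^ 2 * hFT + 12 * F * hE +
    12 * hT.commute_F_casimir.eq - 12 * (hT.semiconjBy_F.pow_right 2).eq

lemma commute_H_add_one_symbolConstant : Commute (H + 1) (symbolConstant E F H T) := by
  have hF : SemiconjBy ((4 * F) ^ 2) (H + 1) (H + 1 + 4) := by
    simpa [show (2 : A) * 2 = 4 by norm_num] using hT.semiconjBy_pow 2
  have hFT : Commute ((4 * F) ^ 2 * T) (H + 1) := by
    have hFT4 : Commute ((4 * F) ^ 2 * T) (H + 1 + 4) := hF.mul_left hT.semiconjBy_T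
    simpa only [add_sub_cancel_right] using hFT4.sub_right (Commute.ofNat_right _ 4)
  exact hFT.symm.add_right (semiconjBy_wittCubic (Commute.refl _) hT.commute_H_add_one_casimir)

lemma commute_casimir_symbolConstant (hcT : Commute (casimir E F H) T) :
    Commute (casimir E F H) (symbolConstant E F H T) := by
  have hF : Commute (casimir E F H) (4 * F) :=
    (Commute.ofNat_right _ 4).mul_right hT.commute_F_casimir.symm
  exact ((hF.pow_right 2).mul_right hcT).add_right
    (semiconjBy_wittCubic hT.commute_H_add_one_casimir.symm (Commute.refl _))

lemma semiconjBy_pow_adSymbol (k n : ℕ) {x y : A} (hx : SemiconjBy ((4 * F) ^ k) x y) :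
    SemiconjBy ((4 * F) ^ k) (adSymbol (casimir E F H) (symbolConstant E F H T) n x)
      (adSymbol (casimir E F H) (symbolConstant E F H T) n y) :=
  semiconjBy_adSymbol hx
    (Commute.pow_left (semiconjBy_four_mul hT.commute_F_casimir) k)
    (Commute.pow_left (semiconjBy_four_mul hT.commute_F_symbolConstant) k) n

lemma pow_mul_ad_iterate (n : ℕ) :
    (4 * F) ^ (n + 2) * (⁅E, ·⁆)^[n] T =
      adSymbol (casimir E F H) (symbolConstant E F H T) n (H + 1) := by
  induction n with
  | zero => simp [adSymbol, symbolConstant]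
  | succ n ih =>
    have hE : (4 * F) ^ 1 * E = casimir E F H - (H + 1) ^ 2 := by
      rw [casimir, pow_one, mul_assoc, add_sub_cancel_left]
    have hcasimir : SemiconjBy ((4 * F) ^ (n + 2)) (casimir E F H - (H + 1) ^ 2)
        (casimir E F H - (H + 1 + 2 * (n + 2 : ℕ)) ^ 2) := by
      have hc : Commute ((4 * F) ^ (n + 2)) (casimir E F H) :=
        Commute.pow_left (semiconjBy_four_mul hT.commute_F_casimir) (n + 2)
      exact SemiconjBy.sub_right hc ((hT.semiconjBy_pow (n + 2)).pow_right 2)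
    have hsymbol := hT.semiconjBy_pow_adSymbol 1 n (hT.semiconjBy_pow 1)
    rw [Function.iterate_succ_apply', show n + 1 + 2 = 1 + (n + 2) by ring,
      pow_mul_lie hE ih hcasimir hsymbol, Nat.cast_one, mul_one, adSymbol]

lemma pow_mul_lie_ad_iterate (n : ℕ) :
    (4 * F) ^ (2 + (n + 2)) * ⁅T, (⁅E, ·⁆)^[n] T⁆ =
      adSymbol (casimir E F H) (symbolConstant E F H T) 0 (H + 1 + 2 * (n + 2 : ℕ)) *
          adSymbol (casimir E F H) (symbolConstant E F H T) n (H + 1) -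
        adSymbol (casimir E F H) (symbolConstant E F H T) n (H + 1 + 2 * (2 : ℕ)) *
          adSymbol (casimir E F H) (symbolConstant E F H T) 0 (H + 1) :=
  pow_mul_lie (hT.pow_mul_ad_iterate 0) (hT.pow_mul_ad_iterate n)
    (hT.semiconjBy_pow_adSymbol _ 0 (hT.semiconjBy_pow _))
    (hT.semiconjBy_pow_adSymbol _ n (hT.semiconjBy_pow _))

theorem degree_seven_of_degree_five [IsAddTorsionFree A] (hF : IsLeftRegular F)
    (hcT : Commute (casimir E F H) T) (h5 : 6 • ⁅T, ⁅E, T⁆⁆ + (⁅E, ·⁆)^[3] T = 0) :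
    20 • ⁅T, (⁅E, ·⁆)^[3] T⁆ + 3 • (⁅E, ·⁆)^[5] T = 0 := by
  have hD : IsLeftRegular ((4 * F) ^ 7) := by
    have four : IsLeftRegular (4 : A) := fun x y hxy =>
      nsmul_right_injective (n := 4) (by norm_num) (by simpa [nsmul_eq_mul] using hxy)
    exact (four.mul hF).pow 7
  let q := adSymbol (casimir E F H) (symbolConstant E F H T)
  have ad_T (n : ℕ) : (4 * F) ^ (n + 2) * (⁅E, ·⁆)^[n] T = q n (H + 1) := hT.pow_mul_ad_iterate n
  have lie_ad_one : (4 * F) ^ 5 * ⁅T, ⁅E, T⁆⁆ =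
      q 0 (H + 1 + 6) * q 1 (H + 1) - q 1 (H + 1 + 4) * q 0 (H + 1) := by
    convert hT.pow_mul_lie_ad_iterate 1 using 5 <;> norm_num
  have lie_ad_three : (4 * F) ^ 7 * ⁅T, (⁅E, ·⁆)^[3] T⁆ =
      q 0 (H + 1 + 10) * q 3 (H + 1) - q 3 (H + 1 + 4) * q 0 (H + 1) := by
    convert hT.pow_mul_lie_ad_iterate 3 using 5 <;> norm_num
  refine hD.mul_left_eq_zero_iff.mp ?_
  calc (4 * F) ^ 7 * (20 • ⁅T, (⁅E, ·⁆)^[3] T⁆ + 3 • (⁅E, ·⁆)^[5] T)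
      = 20 * (q 0 (H + 1 + 10) * q 3 (H + 1) - q 3 (H + 1 + 4) * q 0 (H + 1)) +
          3 * q 5 (H + 1) := by
        rw [mul_add, mul_smul_comm, mul_smul_comm, lie_ad_three, ad_T 5, nsmul_eq_mul, nsmul_eq_mul]
        norm_cast
    _ = 240 * (5 * (H + 1 + 6) ^ 2 + casimir E F H - 4) *
          (6 * (q 0 (H + 1 + 6) * q 1 (H + 1) - q 1 (H + 1 + 4) * q 0 (H + 1)) + q 3 (H + 1)) :=
        adSymbol_degree_seven_of_commute hT.commute_H_add_one_casimir
          hT.commute_H_add_one_symbolConstant (hT.commute_casimir_symbolConstant hcT)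
    _ = 240 * (5 * (H + 1 + 6) ^ 2 + casimir E F H - 4) *
          ((4 * F) ^ 5 * (6 • ⁅T, ⁅E, T⁆⁆ + (⁅E, ·⁆)^[3] T)) := by
        rw [mul_add (_ ^ 5), mul_smul_comm, lie_ad_one, ad_T 3, nsmul_eq_mul]
        norm_cast
    _ = 0 := by rw [h5, mul_zero, mul_zero]

end IsWittQuadruple

end DegreeSeven

section WeightModule

lemma casimir_eq_of_lie_eq {A : Type*} [Ring A] {E F H : A} (hEF : ⁅E, F⁆ = H) :
    casimir E F H = (H - 1) ^ 2 + 4 * (E * F) := by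
  rw [Ring.lie_def] at hEF
  rw [casimir]
  linear_combination (norm := noncomm_ring) -4 * hEF

lemma casimir_eq_add_smul (R : Type*) {A : Type*} [CommRing R] [Ring A] [Algebra R A]
    (E F H : A) : casimir E F H = (H + 1) ^ 2 + (4 : R) • (F * E) := by
  rw [casimir, ofNat_smul_eq_nsmul, nsmul_eq_mul, Nat.cast_ofNat]

variable {K V : Type*} [Field K] [AddCommGroup V] [Module K V]

lemma injective_of_iSup_eq_top {ι : Type*} {f : Module.End K V} {W W' : ι → Submodule K V}
    (hW : ⨆ i, W i = ⊤) (hW' : iSupIndep W') (hmaps : ∀ i, ∀ v ∈ W i, f v ∈ W' i)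
    (hinj : ∀ i, ∀ v ∈ W i, f v = 0 → v = 0) : Function.Injective f := by
  rw [injective_iff_map_eq_zero]
  intro v hv
  obtain ⟨x, hx, rfl⟩ := (Submodule.mem_iSup_iff_exists_finsupp W v).mp (hW ▸ Submodule.mem_top)
  rw [Finsupp.sum, map_sum] at hv
  have hfx := (iSupIndep_iff_finsetSum_eq_zero_imp_eq_zero W').mp hW' x.support (fun i => f (x i))
    (fun i _ => hmaps i _ (hx i)) hv
  exact Finset.sum_eq_zero fun i hi => hinj i _ (hx i) (hfx i hi)

variable {E F H : Module.End K V} {μ τ : K} {v : V}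

lemma casimir_apply_of_apply_eq_zero (hEF : ⁅E, F⁆ = H) (hv : H v = μ • v) (hFv : F v = 0) :
    casimir E F H v = (μ - 1) ^ 2 • v := by
  have hHv : (H - 1) v = (μ - 1) • v := by simp [hv, sub_smul]
  rw [casimir_eq_of_lie_eq hEF]
  simp [pow_two, hHv, hFv, mul_smul]

lemma eq_zero_of_apply_eq_zero (hEF : ⁅E, F⁆ = H) (hv : H v = μ • v) (hFv : F v = 0)
    (hcv : v ∈ (casimir E F H).maxGenEigenspace τ) (hτ : τ ≠ (μ - 1) ^ 2) : v = 0 := by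
  have hv' : v ∈ (casimir E F H).maxGenEigenspace ((μ - 1) ^ 2) :=
    Module.End.mem_maxGenEigenspace _ _ _ |>.mpr
      ⟨1, by simp [casimir_apply_of_apply_eq_zero hEF hv hFv]⟩
  exact Submodule.disjoint_def.mp (Module.End.disjoint_genEigenspace _ hτ ⊤ ⊤) v hcv hv'

lemma apply_mem_eigenspace_sub_two (hHF : ⁅H, F⁆ = -(2 • F)) (hv : v ∈ H.eigenspace μ) :
    F v ∈ H.eigenspace (μ - 2) := by
  rw [Module.End.mem_eigenspace_iff] at hv ⊢
  have comm := congr($hHF v)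
  simp only [Ring.lie_def, LinearMap.sub_apply, Module.End.mul_apply, hv, map_smul,
    LinearMap.neg_apply, LinearMap.smul_apply] at comm
  linear_combination (norm := module) comm

theorem injective_of_iSup_eigenspace_eq_top {ι : Type*} {μ : ι → K} (hμ : Function.Injective μ)
    (hEF : ⁅E, F⁆ = H) (hHF : ⁅H, F⁆ = -(2 • F)) (htop : ⨆ i, H.eigenspace (μ i) = ⊤)
    (hc : ∀ i, H.eigenspace (μ i) ≤ (casimir E F H).maxGenEigenspace τ)
    (hτ : ∀ i, τ ≠ (μ i - 1) ^ 2) : Function.Injective F := by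
  have hμ' : Function.Injective fun i => μ i - 2 := sub_left_injective.comp hμ
  refine injective_of_iSup_eq_top htop (H.eigenspaces_iSupIndep.comp hμ')
    (fun i v hv => apply_mem_eigenspace_sub_two hHF hv) fun i v hv hFv => ?_
  exact eq_zero_of_apply_eq_zero hEF (Module.End.mem_eigenspace_iff.mp hv) hFv (hc i hv) (hτ i)

theorem injective_of_isInternal_weightSpaces [CharZero K] {μ₀ : K}
    (hEF : ⁅E, F⁆ = H) (hHF : ⁅H, F⁆ = (-2 : K) • F)
    (hint : DirectSum.IsInternal fun n : ℤ =>
      LinearMap.ker (H - (μ₀ + 2 * n : K) • (1 : Module.End K V)))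
    (hτ : ∀ n : ℤ, τ ≠ (μ₀ + 2 * n + 1) ^ 2)
    (hnil : ∀ n : ℤ, ∀ x ∈ LinearMap.ker (H - (μ₀ + 2 * n : K) • (1 : Module.End K V)),
      ∃ m : ℕ, ((((H + 1) ^ 2 + (4 : K) • (F * E) - τ • (1 : Module.End K V)) ^ m :
        Module.End K V)) x = 0) : Function.Injective F := by
  have hμ : Function.Injective fun n : ℤ => μ₀ + 2 * n := fun m n hmn => by simpa using hmn
  simp only [← Module.End.eigenspace_def] at hint hnil
  refine injective_of_iSup_eigenspace_eq_top (τ := τ) hμ hEF (by rw [hHF]; module)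
    hint.submodule_iSup_eq_top (fun n x hx => ?_) fun n => ?_
  · rw [Module.End.mem_maxGenEigenspace, casimir_eq_add_smul K]
    exact hnil n x hx
  · convert hτ (n - 1) using 2
    push_cast
    ring

end WeightModule

theorem weight_module_wittGt_extension_finite_relations_general
    (V : Type*) [AddCommGroup V] [Module ℂ V]
    (E F H : Module.End ℂ V) (hF : Function.Injective F)
    (hEF : ⁅E, F⁆ = H) (hHE : ⁅H, E⁆ = (2 : ℂ) • E) (hHF : ⁅H, F⁆ = (-2 : ℂ) • F)
    (T : Module.End ℂ V)
    (hFT : ⁅F, T⁆ = (3 : ℂ) • E)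
    (hHT : ⁅H, T⁆ = (4 : ℂ) • T)
    (hcT : ⁅(H + 1) ^ 2 + (4 : ℂ) • (F * E), T⁆ = 0)
    (hTT : ⁅T, ⁅E, T⁆⁆ = (-(1 / 6) : ℂ) • ⁅E, ⁅E, ⁅E, T⁆⁆⁆) :
    ∃ ρ : ℤ → Module.End ℂ V, IsWittGtModule E F H ρ ∧ ρ 2 = T := by
  have hT : IsWittQuadruple E F H T :=
    ⟨hEF, by rw [hHE]; module, by rw [hHF]; module, by rw [hFT]; module, by rw [hHT]; module⟩
  have hcT' : Commute (casimir E F H) T := by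
    rwa [commute_iff_lie_eq, casimir_eq_add_smul ℂ]
  have h5 : 6 • ⁅T, ⁅E, T⁆⁆ + (⁅E, ·⁆)^[3] T = 0 := by
    rw [hTT]
    simp only [Function.iterate_succ_apply', Function.iterate_zero, id_eq]
    module
  have : IsAddTorsionFree (Module.End ℂ V) := .of_isTorsionFree ℂ _
  have hFreg : IsLeftRegular F := fun x y hxy =>
    LinearMap.ext fun v => hF (LinearMap.congr_fun hxy v)
  have h7 := hT.degree_seven_of_degree_five hFreg hcT' h5
  let _ : LieRing (Module.End ℂ V) := LieRing.ofAssociativeRing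
  let _ : LieAlgebra ℂ (Module.End ℂ V) := LieAlgebra.ofAssociativeAlgebra
  refine ⟨wittSequence ℂ E F H T, ⟨rfl, rfl, rfl, fun i j hi hj => ?_⟩, by simp [wittSequence]⟩
  rw [wittDefect_eq_zero_iff.mp (wittDefect_wittSequence hT h5 h7 hi hj), Int.cast_smul_eq_zsmul]

/-- on an object of the category `M̄^{ξ,τ}` (with `τ ≠ 0` and
`τ ≠ (μ+1)²` for all `μ ∈ ξ`), any `T` satisfying the four listed relations
gives rise to a compatible Witt_>-module structure with `ρ₂ = T`. -/
theorem weight_module_wittGt_extension_finite_relations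
    (V : Type*) [AddCommGroup V] [Module ℂ V] (μ₀ τ : ℂ)
    (hτ0 : τ ≠ 0)
    (hτ : ∀ n : ℤ, τ ≠ (μ₀ + 2 * n + 1) ^ 2)
    (E F H : Module.End ℂ V)
    (hEF : ⁅E, F⁆ = H) (hHE : ⁅H, E⁆ = (2 : ℂ) • E) (hHF : ⁅H, F⁆ = (-2 : ℂ) • F)
    (hint : DirectSum.IsInternal fun n : ℤ =>
      LinearMap.ker (H - (μ₀ + 2 * n : ℂ) • (1 : Module.End ℂ V)))
    (hfd : ∀ n : ℤ, FiniteDimensional ℂ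
      (LinearMap.ker (H - (μ₀ + 2 * n : ℂ) • (1 : Module.End ℂ V)) : Submodule ℂ V))
    (hnil : ∀ n : ℤ, ∀ x ∈ LinearMap.ker (H - (μ₀ + 2 * n : ℂ) • (1 : Module.End ℂ V)),
      ∃ m : ℕ, ((((H + 1) ^ 2 + (4 : ℂ) • (F * E) - τ • (1 : Module.End ℂ V)) ^ m :
        Module.End ℂ V)) x = 0)
    (T : Module.End ℂ V)
    (hFT : ⁅F, T⁆ = (3 : ℂ) • E)
    (hHT : ⁅H, T⁆ = (4 : ℂ) • T)
    (hcT : ⁅(H + 1) ^ 2 + (4 : ℂ) • (F * E), T⁆ = 0)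
    (hTT : ⁅T, ⁅E, T⁆⁆ = (-(1/6) : ℂ) • ⁅E, ⁅E, ⁅E, T⁆⁆⁆) :
    ∃ ρ : ℤ → Module.End ℂ V, IsWittGtModule E F H ρ ∧ ρ 2 = T := by
  exact weight_module_wittGt_extension_finite_relations_general V E F H
    (injective_of_isInternal_weightSpaces hEF hHF hint hτ hnil) hEF hHE hHF T hFT hHT hcT hTT
end
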